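/- Let n ≥ 2, let q be the Lorentzian quadratic form q(x) = 2x₁x_{n+1} + x₂² + ⋯ + xₙ² on ℝ^{n+1}, and let ρ be a continuous representation of O(1,n) on a finite-dimensional real normed vector space V. Let 𝒢 be a subset of O(1,n), let E ⊆ ℝ^{n+1} be the linear span of all limit directions of 𝒢, and assume dim E ≥ 3. Then every vector v₀ ∈ V that is stable under 𝒢 is fixed by SO°(E), i.e. ρ(g)v₀ = v₀ for every g in the identity component of the subgroup {g ∈ O(1,n) : g(E) = E and g(x) = x for every x orthogonal to E}. (This subgroup is a copy of SO°(1, dim E − 1) inside O(1,n).) -/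

import Mathlib

open Matrix Filter Topology Bornology

noncomputable section

/-- The Lorentzian quadratic form `q(x) = 2 x₁ x_{n+1} + x₂² + ⋯ + xₙ²` on `ℝ^{n+1}`
(coordinates indexed by `Fin (n+1)`, so `x₁` is `x 0` and `x_{n+1}` is `x (Fin.last n)`). -/
def lorQ (n : ℕ) (x : Fin (n + 1) → ℝ) : ℝ :=
  2 * x 0 * x (Fin.last n) +
    ∑ i : Fin (n + 1), if i ≠ 0 ∧ i ≠ Fin.last n then x i ^ 2 else 0

/-- The polar bilinear form `B` of `lorQ`. -/
def lorB (n : ℕ) (x y : Fin (n + 1) → ℝ) : ℝ :=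
  x 0 * y (Fin.last n) + x (Fin.last n) * y 0 +
    ∑ i : Fin (n + 1), if i ≠ 0 ∧ i ≠ Fin.last n then x i * y i else 0

/-- The Lorentz group `O(1,n)`: linear automorphisms of `ℝ^{n+1}` preserving `lorQ`. -/
def LorentzGrp (n : ℕ) : Subgroup (GL (Fin (n + 1)) ℝ) where
  carrier := {g | ∀ x, lorQ n ((g : Matrix (Fin (n + 1)) (Fin (n + 1)) ℝ).mulVec x) = lorQ n x}
  one_mem' := by intro x; simp
  mul_mem' := by
    intro a b ha hb x
    have h : ((a * b : GL (Fin (n + 1)) ℝ) : Matrix (Fin (n + 1)) (Fin (n + 1)) ℝ).mulVec x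
        = (a : Matrix (Fin (n + 1)) (Fin (n + 1)) ℝ).mulVec
            ((b : Matrix (Fin (n + 1)) (Fin (n + 1)) ℝ).mulVec x) := by
      rw [Matrix.mulVec_mulVec]; rfl
    rw [h, ha, hb]
  inv_mem' := by
    intro g hg x
    have h : (g : Matrix (Fin (n + 1)) (Fin (n + 1)) ℝ).mulVec
        ((↑g⁻¹ : Matrix (Fin (n + 1)) (Fin (n + 1)) ℝ).mulVec x) = x := by
      rw [Matrix.mulVec_mulVec]
      have : (g : Matrix (Fin (n + 1)) (Fin (n + 1)) ℝ) * (↑g⁻¹ : Matrix (Fin (n + 1)) (Fin (n + 1)) ℝ)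
          = (1 : Matrix (Fin (n + 1)) (Fin (n + 1)) ℝ) := by
        rw [← Units.val_mul, mul_inv_cancel, Units.val_one]
      rw [this, Matrix.one_mulVec]
    calc lorQ n ((↑g⁻¹ : Matrix (Fin (n + 1)) (Fin (n + 1)) ℝ).mulVec x)
        = lorQ n ((g : Matrix (Fin (n + 1)) (Fin (n + 1)) ℝ).mulVec
            ((↑g⁻¹ : Matrix (Fin (n + 1)) (Fin (n + 1)) ℝ).mulVec x)) := (hg _).symm
      _ = lorQ n x := by rw [h]

/-- The action of an element of `O(1,n)` on a vector of `ℝ^{n+1}`. -/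
def lorAct {n : ℕ} (g : LorentzGrp n) (x : Fin (n + 1) → ℝ) : Fin (n + 1) → ℝ :=
  ((g : GL (Fin (n + 1)) ℝ) : Matrix (Fin (n + 1)) (Fin (n + 1)) ℝ).mulVec x

/-- The base point `o = e₁ − e_{n+1}`, a timelike vector. -/
def basePt (n : ℕ) : Fin (n + 1) → ℝ := fun i =>
  if i = 0 then 1 else if i = Fin.last n then -1 else 0

/-- `u` is a limit direction of a subset `G` of `O(1,n)`: `u` is nonzero lightlike, and some
sequence `λ_k • g_k⁻¹(o)`, with `g_k ∈ G`, converges to `u`. -/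
def IsLimitDirection (n : ℕ) (G : Set (LorentzGrp n)) (u : Fin (n + 1) → ℝ) : Prop :=
  u ≠ 0 ∧ lorQ n u = 0 ∧
    ∃ (g : ℕ → LorentzGrp n) (lam : ℕ → ℝ), (∀ k, g k ∈ G) ∧
      Tendsto (fun k => lam k • lorAct (g k)⁻¹ (basePt n)) atTop (𝓝 u)

/-- A vector `v` is stable under `G ⊆ O(1,n)` if its `ρ`-orbit under `G` is bounded. -/
def IsStableVec {n : ℕ} {V : Type*} [NormedAddCommGroup V] [NormedSpace ℝ V]
    (ρ : LorentzGrp n →* (V →L[ℝ] V)) (G : Set (LorentzGrp n)) (v : V) : Prop :=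
  IsBounded {w : V | ∃ g ∈ G, w = ρ g v}

/-- `SO°(E)`: the identity component of the subgroup of `O(1,n)` of elements leaving `E`
invariant and fixing pointwise every vector orthogonal to `E`. -/
def SOIdComp (n : ℕ) (E : Submodule ℝ (Fin (n + 1) → ℝ)) : Set (LorentzGrp n) :=
  connectedComponentIn
    {g : LorentzGrp n |
      E.map ((g : GL (Fin (n + 1)) ℝ) : Matrix (Fin (n + 1)) (Fin (n + 1)) ℝ).mulVecLin = E ∧
      ∀ x : Fin (n + 1) → ℝ, (∀ e ∈ E, lorB n x e = 0) → lorAct g x = x} 1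


set_option linter.unusedSimpArgs false
set_option linter.unusedSectionVars false

section basics
variable {n : ℕ}

lemma lorB_add_left (x y z : Fin (n+1) → ℝ) : lorB n (x + y) z = lorB n x z + lorB n y z := by
  have : (∑ i : Fin (n + 1), if i ≠ 0 ∧ i ≠ Fin.last n then (x + y) i * z i else 0)
    = (∑ i : Fin (n + 1), if i ≠ 0 ∧ i ≠ Fin.last n then x i * z i else 0)
    + ∑ i : Fin (n + 1), if i ≠ 0 ∧ i ≠ Fin.last n then y i * z i else 0 := by
    rw [← Finset.sum_add_distrib]
    refine Finset.sum_congr rfl fun i _ => ?_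
    split_ifs <;> simp [add_mul]
  unfold lorB
  rw [this]; simp only [Pi.add_apply]; ring

lemma lorB_smul_left (c : ℝ) (x z : Fin (n+1) → ℝ) : lorB n (c • x) z = c * lorB n x z := by
  have : (∑ i : Fin (n + 1), if i ≠ 0 ∧ i ≠ Fin.last n then (c • x) i * z i else 0)
    = c * (∑ i : Fin (n + 1), if i ≠ 0 ∧ i ≠ Fin.last n then x i * z i else 0) := by
    rw [Finset.mul_sum]
    refine Finset.sum_congr rfl fun i _ => ?_
    split_ifs <;> simp [mul_assoc]
  unfold lorB
  rw [this]; simp only [Pi.smul_apply, smul_eq_mul]; ring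

lemma lorB_comm (x y : Fin (n+1) → ℝ) : lorB n x y = lorB n y x := by
  unfold lorB
  simp only [mul_comm (y _) (x _)]
  ring

lemma lorB_add_right (x y z : Fin (n+1) → ℝ) : lorB n x (y + z) = lorB n x y + lorB n x z := by
  rw [lorB_comm, lorB_add_left, lorB_comm y, lorB_comm z]

lemma lorB_smul_right (c : ℝ) (x z : Fin (n+1) → ℝ) : lorB n x (c • z) = c * lorB n x z := by
  rw [lorB_comm, lorB_smul_left, lorB_comm z]

lemma lorB_neg_left (x z : Fin (n+1) → ℝ) : lorB n (-x) z = - lorB n x z := by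
  rw [← neg_one_smul ℝ x, lorB_smul_left]; ring

lemma lorB_neg_right (x z : Fin (n+1) → ℝ) : lorB n x (-z) = - lorB n x z := by
  rw [← neg_one_smul ℝ z, lorB_smul_right]; ring

lemma lorB_sub_left (x y z : Fin (n+1) → ℝ) : lorB n (x - y) z = lorB n x z - lorB n y z := by
  rw [sub_eq_add_neg, lorB_add_left, lorB_neg_left]; ring

lemma lorB_sub_right (x y z : Fin (n+1) → ℝ) : lorB n x (y - z) = lorB n x y - lorB n x z := by
  rw [sub_eq_add_neg, lorB_add_right, lorB_neg_right]; ring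

lemma lorB_self (x : Fin (n+1) → ℝ) : lorB n x x = lorQ n x := by
  unfold lorB lorQ
  simp only [← pow_two]
  ring

/-- `lorB` as a bilinear map. -/
def lorBil (n : ℕ) : (Fin (n+1) → ℝ) →ₗ[ℝ] (Fin (n+1) → ℝ) →ₗ[ℝ] ℝ :=
  LinearMap.mk₂ ℝ (lorB n) lorB_add_left lorB_smul_left lorB_add_right lorB_smul_right

lemma lorBil_apply (x y : Fin (n+1) → ℝ) : lorBil n x y = lorB n x y := rfl

lemma lorB_continuous : Continuous fun p : (Fin (n+1) → ℝ) × (Fin (n+1) → ℝ) => lorB n p.1 p.2 := by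
  unfold lorB
  refine Continuous.add (by fun_prop) ?_
  refine continuous_finsetSum _ fun i _ => ?_
  split_ifs <;> fun_prop

lemma lorQ_continuous : Continuous fun p : (Fin (n+1) → ℝ) => lorQ n p := by
  simp only [← lorB_self]
  exact lorB_continuous.comp (continuous_id.prodMk continuous_id)

/-- the swap of the two extreme coordinates -/
def sw (n : ℕ) : Equiv.Perm (Fin (n+1)) := Equiv.swap 0 (Fin.last n)

lemma sw_sw (i : Fin (n+1)) : sw n (sw n i) = i := Equiv.swap_apply_self _ _ _

lemma lorB_eq_sum (hn : 2 ≤ n) (x y : Fin (n+1) → ℝ) :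
    lorB n x y = ∑ i, x i * y (sw n i) := by
  have h0 : (0 : Fin (n+1)) ≠ Fin.last n := by
    intro h; have := congrArg Fin.val h; simp at this; omega
  have h1 : ∀ f : Fin (n+1) → ℝ, ∑ i, f i = f 0 + f (Fin.last n) +
      ∑ i, if i ≠ 0 ∧ i ≠ Fin.last n then f i else 0 := by
    intro f
    have e : ∀ i, f i = (if i = 0 then f i else 0) + (if i = Fin.last n then f i else 0) +
      (if i ≠ 0 ∧ i ≠ Fin.last n then f i else 0) := by
      intro i
      by_cases a : i = 0
      · subst a; simp [h0]
      · by_cases b : i = Fin.last n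
        · subst b; simp [Ne.symm h0]
        · simp [a, b]
    rw [Finset.sum_congr rfl fun i _ => e i]
    rw [Finset.sum_add_distrib, Finset.sum_add_distrib]
    simp
  rw [h1]
  unfold lorB sw
  simp only [Equiv.swap_apply_left, Equiv.swap_apply_right]
  congr 1
  refine Finset.sum_congr rfl fun i _ => ?_
  split_ifs with h
  · rw [Equiv.swap_apply_of_ne_of_ne h.1 h.2]
  · rfl

lemma lorB_nondeg (hn : 2 ≤ n) (x : Fin (n+1) → ℝ) (h : ∀ y, lorB n x y = 0) : x = 0 := by
  funext i
  have := h (Pi.single (sw n i) 1)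
  rw [lorB_eq_sum hn] at this
  simpa [Pi.single_apply] using this

/-- Riesz representation for `lorB`. -/
lemma lorB_riesz (hn : 2 ≤ n) (φ : (Fin (n+1) → ℝ) →ₗ[ℝ] ℝ) :
    ∃ z, ∀ x, lorB n x z = φ x := by
  refine ⟨fun i => φ (Pi.single (sw n i) 1), fun x => ?_⟩
  rw [lorB_eq_sum hn]
  simp only [sw_sw]
  conv_rhs => rw [LinearMap.pi_apply_eq_sum_univ φ x]
  simp only [smul_eq_mul]
  refine Finset.sum_congr rfl fun i _ => ?_
  congr 2
  funext j
  simp [Pi.single_apply, eq_comm]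

lemma lorB_basePt (hn : 2 ≤ n) (y : Fin (n+1) → ℝ) :
    lorB n y (basePt n) = y (Fin.last n) - y 0 := by
  have h0 : (0 : Fin (n+1)) ≠ Fin.last n := by
    intro h; have := congrArg Fin.val h; simp at this; omega
  unfold lorB basePt
  have : ∀ i : Fin (n+1), (if i ≠ 0 ∧ i ≠ Fin.last n then
      y i * (if i = 0 then 1 else if i = Fin.last n then -1 else 0) else 0) = (0:ℝ) := by
    intro i
    split_ifs <;> simp_all
  simp only [this]
  simp [Ne.symm h0]; ring

lemma lorQ_add_sq (hn : 2 ≤ n) (y : Fin (n+1) → ℝ) :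
    lorQ n y + lorB n y (basePt n) ^ 2 = ∑ i, y i ^ 2 := by
  rw [lorB_basePt hn]
  have h0 : (0 : Fin (n+1)) ≠ Fin.last n := by
    intro h; have := congrArg Fin.val h; simp at this; omega
  have h1 : ∀ f : Fin (n+1) → ℝ, ∑ i, f i = f 0 + f (Fin.last n) +
      ∑ i, if i ≠ 0 ∧ i ≠ Fin.last n then f i else 0 := by
    intro f
    have e : ∀ i, f i = (if i = 0 then f i else 0) + (if i = Fin.last n then f i else 0) +
      (if i ≠ 0 ∧ i ≠ Fin.last n then f i else 0) := by
      intro i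
      by_cases a : i = 0
      · subst a; simp [h0]
      · by_cases b : i = Fin.last n
        · subst b; simp [Ne.symm h0]
        · simp [a, b]
    rw [Finset.sum_congr rfl fun i _ => e i]
    rw [Finset.sum_add_distrib, Finset.sum_add_distrib]
    simp
  rw [h1]
  unfold lorQ
  ring

lemma lorQ_basePt (hn : 2 ≤ n) : lorQ n (basePt n) = -2 := by
  rw [← lorB_self, lorB_basePt hn]
  have h0 : (0 : Fin (n+1)) ≠ Fin.last n := by
    intro h; have := congrArg Fin.val h; simp at this; omega
  simp [basePt, Ne.symm h0]; norm_num

/-- a vector orthogonal to `o` has nonnegative `q` and `q = 0` only for zero -/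
lemma lorQ_nonneg_of_orth_o (hn : 2 ≤ n) (y : Fin (n+1) → ℝ) (h : lorB n y (basePt n) = 0) :
    0 ≤ lorQ n y := by
  have := lorQ_add_sq hn y
  rw [h] at this
  have h2 : 0 ≤ ∑ i, y i ^ 2 := Finset.sum_nonneg fun i _ => sq_nonneg _
  linarith

lemma eq_zero_of_orth_o (hn : 2 ≤ n) (y : Fin (n+1) → ℝ) (h : lorB n y (basePt n) = 0)
    (hq : lorQ n y = 0) : y = 0 := by
  have := lorQ_add_sq hn y
  rw [h, hq] at this
  have h2 : ∑ i, y i ^ 2 = 0 := by linarith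
  rw [Finset.sum_eq_zero_iff_of_nonneg fun i _ => sq_nonneg _] at h2
  funext i
  simpa using h2 i (Finset.mem_univ _)

lemma lorQ_pos_of_orth (hn : 2 ≤ n) (z x : Fin (n+1) → ℝ) (hz : lorQ n z < 0)
    (hx : lorB n x z = 0) (hx0 : x ≠ 0) : 0 < lorQ n x := by
  have hzo : lorB n z (basePt n) ≠ 0 := by
    intro h; exact absurd (lorQ_nonneg_of_orth_o hn z h) (not_le.mpr hz)
  have hy := lorQ_nonneg_of_orth_o hn
    (lorB n x (basePt n) • z - lorB n z (basePt n) • x) (by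
      rw [lorB_sub_left, lorB_smul_left, lorB_smul_left]; ring)
  rw [← lorB_self] at hy
  simp only [lorB_sub_left, lorB_sub_right, lorB_smul_left, lorB_smul_right] at hy
  simp only [lorB_self, lorB_comm z x, hx] at hy
  have hp : 0 < lorB n z (basePt n) ^ 2 := by positivity
  by_contra hcon
  push Not at hcon
  have h1 : lorB n x (basePt n) ^ 2 * (-lorQ n z) ≤ lorB n z (basePt n) ^ 2 * lorQ n x := by
    nlinarith
  have h2 : lorB n z (basePt n) ^ 2 * lorQ n x ≤ 0 := mul_nonpos_of_nonneg_of_nonpos hp.le hcon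
  have h3 : lorB n x (basePt n) ^ 2 ≤ 0 := by
    by_contra h; push Not at h
    have : 0 < lorB n x (basePt n) ^ 2 * (-lorQ n z) := mul_pos h (by linarith)
    linarith
  have h4 : lorB n x (basePt n) = 0 := by nlinarith
  have h5 := lorQ_nonneg_of_orth_o hn x h4
  exact hx0 (eq_zero_of_orth_o hn x h4 (le_antisymm hcon h5))

lemma lorB_ne_zero_of_null (hn : 2 ≤ n) (u u' : Fin (n+1) → ℝ) (hu : lorQ n u = 0)
    (hu' : lorQ n u' = 0) (hli : LinearIndependent ℝ ![u, u']) : lorB n u u' ≠ 0 := by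
  intro h
  have hy := eq_zero_of_orth_o hn
    (lorB n u' (basePt n) • u + (- lorB n u (basePt n)) • u') (by
      rw [lorB_add_left, lorB_smul_left, lorB_smul_left]; ring) (by
      rw [← lorB_self]
      simp only [lorB_add_left, lorB_add_right, lorB_smul_left, lorB_smul_right]
      simp only [lorB_self, lorB_comm u' u, h, hu, hu']
      ring)
  rw [LinearIndependent.pair_iff] at hli
  have h2 := (hli _ _ hy).2
  have : u = 0 := eq_zero_of_orth_o hn u (by linarith) hu
  have := hli 1 0 (by simp [this])
  simp at this

lemma exists_unit_orth (hn : 2 ≤ n) (u u' : Fin (n+1) → ℝ) (hu : lorQ n u = 0)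
    (hu' : lorQ n u' = 0) (huu : lorB n u u' = 1) :
    ∃ w, lorB n w u = 0 ∧ lorB n w u' = 0 ∧ lorQ n w = 1 := by
  obtain ⟨w, hw, hw0⟩ := (Submodule.ne_bot_iff _).1 (LinearMap.ker_ne_bot_of_finrank_lt
    (f := ((lorBil n).flip u).prod ((lorBil n).flip u')) (by simp; omega))
  replace hw : lorB n w u = 0 ∧ lorB n w u' = 0 := by
    have := LinearMap.mem_ker.1 hw
    exact ⟨congrArg Prod.fst this, congrArg Prod.snd this⟩
  have hpos := lorQ_pos_of_orth hn (u - u') w (by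
    rw [← lorB_self]
    simp only [lorB_sub_left, lorB_sub_right]
    simp only [lorB_self, hu, hu', huu, lorB_comm u' u]
    norm_num) (by rw [lorB_sub_right, hw.1, hw.2]; ring) hw0
  refine ⟨(Real.sqrt (lorQ n w))⁻¹ • w, ?_, ?_, ?_⟩
  · rw [lorB_smul_left, hw.1, mul_zero]
  · rw [lorB_smul_left, hw.2, mul_zero]
  · rw [← lorB_self, lorB_smul_left, lorB_smul_right, lorB_self]
    have := Real.mul_self_sqrt hpos.le
    have h2 : Real.sqrt (lorQ n w) ≠ 0 := (Real.sqrt_pos.2 hpos).ne'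
    field_simp
    nlinarith

end basics

section grp
variable {n : ℕ}

lemma lorAct_mul (g h : LorentzGrp n) (x : Fin (n+1) → ℝ) :
    lorAct (g * h) x = lorAct g (lorAct h x) := by
  unfold lorAct
  rw [Matrix.mulVec_mulVec]; rfl

lemma lorAct_one (x : Fin (n+1) → ℝ) : lorAct (1 : LorentzGrp n) x = x := by
  unfold lorAct; simp

lemma lorAct_inv_act (g : LorentzGrp n) (x : Fin (n+1) → ℝ) : lorAct g⁻¹ (lorAct g x) = x := by
  rw [← lorAct_mul, inv_mul_cancel, lorAct_one]

lemma lorAct_act_inv (g : LorentzGrp n) (x : Fin (n+1) → ℝ) : lorAct g (lorAct g⁻¹ x) = x := by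
  rw [← lorAct_mul, mul_inv_cancel, lorAct_one]

lemma lorAct_add (g : LorentzGrp n) (x y : Fin (n+1) → ℝ) :
    lorAct g (x + y) = lorAct g x + lorAct g y := Matrix.mulVec_add _ _ _

lemma lorAct_sub (g : LorentzGrp n) (x y : Fin (n+1) → ℝ) :
    lorAct g (x - y) = lorAct g x - lorAct g y := Matrix.mulVec_sub _ _ _

lemma lorAct_smul (g : LorentzGrp n) (c : ℝ) (x : Fin (n+1) → ℝ) :
    lorAct g (c • x) = c • lorAct g x := Matrix.mulVec_smul _ _ _

lemma lorQ_act (g : LorentzGrp n) (x : Fin (n+1) → ℝ) : lorQ n (lorAct g x) = lorQ n x :=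
  g.2 x

lemma lorB_polar (x y : Fin (n+1) → ℝ) :
    lorB n x y = (lorQ n (x + y) - lorQ n x - lorQ n y) / 2 := by
  simp only [← lorB_self, lorB_add_left, lorB_add_right, lorB_comm y x]; ring

lemma lorB_act (g : LorentzGrp n) (x y : Fin (n+1) → ℝ) :
    lorB n (lorAct g x) (lorAct g y) = lorB n x y := by
  simp only [lorB_polar, ← lorAct_add, lorQ_act]

lemma lorB_act_left (g : LorentzGrp n) (x y : Fin (n+1) → ℝ) :
    lorB n (lorAct g x) y = lorB n x (lorAct g⁻¹ y) := by
  rw [← lorB_act g x, lorAct_act_inv]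

lemma lorAct_apply_single (g : LorentzGrp n) (i j : Fin (n+1)) :
    ((g : GL (Fin (n + 1)) ℝ) : Matrix (Fin (n + 1)) (Fin (n + 1)) ℝ) i j =
      lorAct g (Pi.single j 1) i := by
  unfold lorAct; simp

lemma lorGrp_ext {g h : LorentzGrp n} (H : ∀ x, lorAct g x = lorAct h x) : g = h := by
  apply Subtype.ext
  apply Units.ext
  ext i j
  rw [lorAct_apply_single, lorAct_apply_single, H]

lemma lorInv_apply (hn : 2 ≤ n) (g : LorentzGrp n) (i j : Fin (n+1)) :
    (((g⁻¹ : LorentzGrp n) : GL (Fin (n + 1)) ℝ) : Matrix (Fin (n + 1)) (Fin (n + 1)) ℝ) i j =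
    ((g : GL (Fin (n + 1)) ℝ) : Matrix (Fin (n + 1)) (Fin (n + 1)) ℝ) (sw n j) (sw n i) := by
  rw [lorAct_apply_single, lorAct_apply_single]
  have h : ∀ (x : Fin (n+1) → ℝ) k, x k = lorB n x (Pi.single (sw n k) 1) := by
    intro x k
    rw [lorB_eq_sum hn]
    simp [Pi.single_apply]
  rw [h (lorAct g⁻¹ _) i, h (lorAct g _) (sw n j), sw_sw, lorB_act_left, inv_inv, lorB_comm]

lemma lorVal_inducing (hn : 2 ≤ n) : IsInducing (fun g : LorentzGrp n =>
    ((g : GL (Fin (n + 1)) ℝ) : Matrix (Fin (n + 1)) (Fin (n + 1)) ℝ)) := by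
  refine isInducing_iff_nhds.2 fun g => ?_
  apply le_antisymm
  · rw [← Filter.tendsto_iff_comap]
    exact (Units.continuous_val.comp continuous_subtype_val).tendsto g
  · rw [IsInducing.subtypeVal.nhds_eq_comap, Units.isInducing_embedProduct.nhds_eq_comap,
      Filter.comap_comap, ← Filter.tendsto_iff_comap]
    refine Filter.Tendsto.prodMk_nhds (Filter.tendsto_comap) ?_
    refine (MulOpposite.continuous_op.tendsto _).comp ?_
    refine tendsto_pi_nhds.2 fun i => tendsto_pi_nhds.2 fun j => ?_
    have : ∀ h : LorentzGrp n, ((((h : GL (Fin (n + 1)) ℝ))⁻¹ : GL (Fin (n + 1)) ℝ) :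
       Matrix (Fin (n + 1)) (Fin (n + 1)) ℝ) i j =
      ((h : GL (Fin (n + 1)) ℝ) : Matrix (Fin (n + 1)) (Fin (n + 1)) ℝ) (sw n j) (sw n i) :=
      fun h => lorInv_apply hn h i j
    simp only [this]
    have h2 : Tendsto (fun M : Matrix (Fin (n + 1)) (Fin (n + 1)) ℝ => M (sw n j) (sw n i))
      (𝓝 ((g : GL (Fin (n + 1)) ℝ) : Matrix (Fin (n + 1)) (Fin (n + 1)) ℝ)) (𝓝 _) :=
      (by fun_prop : Continuous (fun M : Matrix (Fin (n + 1)) (Fin (n + 1)) ℝ =>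
        M (sw n j) (sw n i))).tendsto _
    exact h2.comp tendsto_comap

lemma lor_tendsto (hn : 2 ≤ n) {α : Type*} {l : Filter α} {f : α → LorentzGrp n}
    {g : LorentzGrp n} (H : ∀ x, Tendsto (fun a => lorAct (f a) x) l (𝓝 (lorAct g x))) :
    Tendsto f l (𝓝 g) := by
  rw [(lorVal_inducing hn).tendsto_nhds_iff]
  refine tendsto_pi_nhds.2 fun i => tendsto_pi_nhds.2 fun j => ?_
  simp only [Function.comp]
  simp only [lorAct_apply_single]
  exact (tendsto_pi_nhds.1 (H (Pi.single j 1))) i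

lemma lorAct_continuous (x : Fin (n+1) → ℝ) : Continuous fun g : LorentzGrp n => lorAct g x := by
  unfold lorAct
  have : Continuous (fun g : LorentzGrp n =>
    ((g : GL (Fin (n + 1)) ℝ) : Matrix (Fin (n + 1)) (Fin (n + 1)) ℝ)) :=
    Units.continuous_val.comp continuous_subtype_val
  fun_prop

lemma exists_lor_of_matrix (hn : 2 ≤ n) (M : Matrix (Fin (n + 1)) (Fin (n + 1)) ℝ)
    (hM : ∀ x, lorQ n (M.mulVec x) = lorQ n x) :
    ∃ g : LorentzGrp n,
      ((g : GL (Fin (n + 1)) ℝ) : Matrix (Fin (n + 1)) (Fin (n + 1)) ℝ) = M := by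
  have hB : ∀ x y, lorB n (M.mulVec x) (M.mulVec y) = lorB n x y := by
    intro x y
    simp only [lorB_polar, ← Matrix.mulVec_add, hM]
  have hinj : Function.Injective M.mulVec := by
    intro x y hxy
    have : x - y = 0 := by
      apply lorB_nondeg hn
      intro z
      rw [← hB, Matrix.mulVec_sub]
      rw [show M.mulVec x = M.mulVec y from hxy, sub_self, lorB_eq_sum hn]
      simp
    exact sub_eq_zero.1 this
  have hu : IsUnit M := Matrix.mulVec_injective_iff_isUnit.1 hinj
  obtain ⟨U, rfl⟩ := hu
  exact ⟨⟨U, hM⟩, rfl⟩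

lemma exists_lor (hn : 2 ≤ n) (f : (Fin (n+1) → ℝ) →ₗ[ℝ] (Fin (n+1) → ℝ))
    (hf : ∀ x, lorQ n (f x) = lorQ n x) : ∃ g : LorentzGrp n, ∀ x, lorAct g x = f x := by
  obtain ⟨g, hg⟩ := exists_lor_of_matrix hn (LinearMap.toMatrix' f) (by
    intro x; rw [LinearMap.toMatrix'_mulVec]; exact hf x)
  refine ⟨g, fun x => ?_⟩
  unfold lorAct
  rw [hg, LinearMap.toMatrix'_mulVec]

lemma lor_compact (hn : 2 ≤ n) (x0 : Fin (n+1) → ℝ) :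
    IsCompact {g : LorentzGrp n | lorAct g x0 = basePt n ∨ lorAct g x0 = - basePt n} := by
  rw [(lorVal_inducing hn).isCompact_iff]
  obtain ⟨C, hC⟩ : ∃ C : ℝ, ∀ j : Fin (n+1),
      |lorQ n (Pi.single j 1) + lorB n (Pi.single j 1) x0 ^ 2| ≤ C :=
    (Set.finite_range _).bddAbove.imp fun C hC j => hC ⟨j, rfl⟩
  have hcpt : IsCompact (Set.pi Set.univ (fun _ : Fin (n+1) => Set.pi Set.univ
      (fun _ : Fin (n+1) => Set.Icc (-(C+1)) (C+1)))) :=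
    isCompact_univ_pi fun i => isCompact_univ_pi fun j => isCompact_Icc
  refine IsCompact.of_isClosed_subset hcpt (s :=
    (show Set (Matrix (Fin (n+1)) (Fin (n+1)) ℝ) from _)) ?_ ?_
  · have : ((fun g : LorentzGrp n =>
        ((g : GL (Fin (n + 1)) ℝ) : Matrix (Fin (n + 1)) (Fin (n + 1)) ℝ)) ''
        {g : LorentzGrp n | lorAct g x0 = basePt n ∨ lorAct g x0 = - basePt n}) =
        (⋂ x, {M | lorQ n (M.mulVec x) = lorQ n x}) ∩
        ({M | M.mulVec x0 = basePt n} ∪ {M | M.mulVec x0 = -basePt n}) := by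
      ext M
      constructor
      · rintro ⟨g, hg, rfl⟩
        exact ⟨Set.mem_iInter.2 fun x => lorQ_act g x, hg⟩
      · rintro ⟨h1, h2⟩
        obtain ⟨g, rfl⟩ := exists_lor_of_matrix hn M (fun x => Set.mem_iInter.1 h1 x)
        exact ⟨g, h2, rfl⟩
    rw [this]
    refine IsClosed.inter (isClosed_iInter fun x => ?_) (IsClosed.union ?_ ?_)
    · exact isClosed_eq (lorQ_continuous.comp (by fun_prop)) continuous_const
    · exact isClosed_eq (by fun_prop) continuous_const
    · exact isClosed_eq (by fun_prop) continuous_const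
  · rintro _ ⟨g, hg, rfl⟩ i _ j _
    simp only
    rw [lorAct_apply_single]
    have h1 := lorQ_add_sq hn (lorAct g (Pi.single j 1))
    have h2 : lorB n (lorAct g (Pi.single j 1)) (basePt n) ^ 2 = lorB n (Pi.single j 1) x0 ^ 2 := by
      rcases hg with h | h
      · rw [← h, lorB_act]
      · rw [← neg_neg (basePt n), ← h, lorB_neg_right, lorB_act, neg_sq]
    rw [h2, lorQ_act] at h1
    have h3 : lorAct g (Pi.single j 1) i ^ 2 ≤ C := by
      calc _ ≤ ∑ k, lorAct g (Pi.single j 1) k ^ 2 :=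
            Finset.single_le_sum (f := fun k => lorAct g (Pi.single j 1) k ^ 2)
              (fun k _ => sq_nonneg _) (Finset.mem_univ i)
        _ ≤ C := by rw [← h1]; exact (le_abs_self _).trans (hC j)
    constructor <;> nlinarith

end grp

section elements
variable {n : ℕ}

/-- The group element with a prescribed action (junk value `1` if there is none). -/
def lorOf (f : (Fin (n+1) → ℝ) →ₗ[ℝ] (Fin (n+1) → ℝ)) : LorentzGrp n :=
  open Classical in
  if h : ∃ g : LorentzGrp n, ∀ x, lorAct g x = f x then h.choose else 1

lemma lorOf_act (hn : 2 ≤ n) (f : (Fin (n+1) → ℝ) →ₗ[ℝ] (Fin (n+1) → ℝ))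
    (hf : ∀ x, lorQ n (f x) = lorQ n x) (x : Fin (n+1) → ℝ) : lorAct (lorOf f) x = f x := by
  have h := exists_lor hn f hf
  unfold lorOf
  rw [dif_pos h]
  exact h.choose_spec x

def boostL (u u' : Fin (n+1) → ℝ) (c : ℝ) : (Fin (n+1) → ℝ) →ₗ[ℝ] (Fin (n+1) → ℝ) :=
  LinearMap.id + (c - 1) • ((lorBil n).flip u').smulRight u +
    (c⁻¹ - 1) • ((lorBil n).flip u).smulRight u'

lemma boostL_apply (u u' : Fin (n+1) → ℝ) (c : ℝ) (x : Fin (n+1) → ℝ) :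
    boostL u u' c x = x + ((c - 1) * lorB n x u') • u + ((c⁻¹ - 1) * lorB n x u) • u' := by
  simp [boostL, lorBil_apply, smul_smul]

def boost (u u' : Fin (n+1) → ℝ) (c : ℝ) : LorentzGrp n := lorOf (boostL u u' c)

def unipL (u' w : Fin (n+1) → ℝ) : (Fin (n+1) → ℝ) →ₗ[ℝ] (Fin (n+1) → ℝ) :=
  LinearMap.id + ((lorBil n).flip u').smulRight w - ((lorBil n).flip w).smulRight u'
    - (lorQ n w / 2) • ((lorBil n).flip u').smulRight u'

lemma unipL_apply (u' w : Fin (n+1) → ℝ) (x : Fin (n+1) → ℝ) :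
    unipL u' w x = x + lorB n x u' • w - lorB n x w • u' - (lorB n w w / 2 * lorB n x u') • u' := by
  simp [unipL, lorBil_apply, smul_smul, lorB_self]

def unip (u' w : Fin (n+1) → ℝ) : LorentzGrp n := lorOf (unipL u' w)

lemma boost_act (hn : 2 ≤ n) {u u' : Fin (n+1) → ℝ} (hu : lorB n u u = 0)
    (hu' : lorB n u' u' = 0) (huu : lorB n u u' = 1) {c : ℝ} (hc : c ≠ 0) (x : Fin (n+1) → ℝ) :
    lorAct (boost u u' c) x =
      x + ((c - 1) * lorB n x u') • u + ((c⁻¹ - 1) * lorB n x u) • u' := by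
  have huu2 : lorB n u' u = 1 := by rw [lorB_comm, huu]
  unfold boost
  rw [lorOf_act hn, boostL_apply]
  intro y
  rw [boostL_apply]
  simp only [← lorB_self]
  simp only [lorB_add_left, lorB_add_right, lorB_smul_left, lorB_smul_right, hu, hu', huu,
    huu2, lorB_comm u y, lorB_comm u' y]
  field_simp
  ring

lemma unip_act (hn : 2 ≤ n) {u' w : Fin (n+1) → ℝ} 
    (hu' : lorB n u' u' = 0) (hw : lorB n w u' = 0) (x : Fin (n+1) → ℝ) :
    lorAct (unip u' w) x =
      x + lorB n x u' • w - lorB n x w • u' - (lorB n w w / 2 * lorB n x u') • u' := by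
  have hw2 : lorB n u' w = 0 := by rw [lorB_comm, hw]
  unfold unip
  rw [lorOf_act hn, unipL_apply]
  intro y
  rw [unipL_apply]
  simp only [← lorB_self]
  simp only [lorB_add_left, lorB_add_right, lorB_smul_left, lorB_smul_right, lorB_sub_left,
    lorB_sub_right, hu', hw, hw2, lorB_comm w y, lorB_comm u' y]
  ring

lemma boost_one (hn : 2 ≤ n) {u u' : Fin (n+1) → ℝ} (hu : lorB n u u = 0)
    (hu' : lorB n u' u' = 0) (huu : lorB n u u' = 1) : boost u u' 1 = 1 := by
  apply lorGrp_ext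
  intro x
  rw [boost_act hn hu hu' huu one_ne_zero, lorAct_one]
  simp

lemma boost_mul (hn : 2 ≤ n) {u u' : Fin (n+1) → ℝ} (hu : lorB n u u = 0)
    (hu' : lorB n u' u' = 0) (huu : lorB n u u' = 1) {c d : ℝ} (hc : c ≠ 0) (hd : d ≠ 0) :
    boost u u' c * boost u u' d = boost u u' (c * d) := by
  have huu2 : lorB n u' u = 1 := by rw [lorB_comm, huu]
  apply lorGrp_ext
  intro x
  rw [lorAct_mul, boost_act hn hu hu' huu hc, boost_act hn hu hu' huu hd,
    boost_act hn hu hu' huu (mul_ne_zero hc hd)]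
  simp only [lorB_add_left, lorB_smul_left, hu, hu', huu, huu2]
  match_scalars <;> field_simp <;> ring

lemma boost_swap (hn : 2 ≤ n) {u u' : Fin (n+1) → ℝ} (hu : lorB n u u = 0)
    (hu' : lorB n u' u' = 0) (huu : lorB n u u' = 1) {c : ℝ} (hc : c ≠ 0) :
    boost u' u c = boost u u' c⁻¹ := by
  have huu2 : lorB n u' u = 1 := by rw [lorB_comm, huu]
  apply lorGrp_ext
  intro x
  rw [boost_act hn hu hu' huu (inv_ne_zero hc), boost_act hn hu' hu huu2 hc, inv_inv]
  module

lemma unip_zero (hn : 2 ≤ n) {u' : Fin (n+1) → ℝ} (hu' : lorB n u' u' = 0) :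
    unip u' 0 = 1 := by
  have h0 : ∀ x, lorB n x 0 = 0 := fun x => by
    rw [← zero_smul ℝ (0 : Fin (n+1) → ℝ), lorB_smul_right, zero_mul]
  apply lorGrp_ext
  intro x
  rw [unip_act hn hu' (by rw [lorB_comm, h0]), lorAct_one]
  simp [h0]

lemma unip_mul (hn : 2 ≤ n) {u' w w' : Fin (n+1) → ℝ} (hu' : lorB n u' u' = 0)
    (hw : lorB n w u' = 0) (hw' : lorB n w' u' = 0) :
    unip u' w * unip u' w' = unip u' (w + w') := by
  have hw2 : lorB n u' w = 0 := by rw [lorB_comm, hw]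
  have hw3 : lorB n u' w' = 0 := by rw [lorB_comm, hw']
  apply lorGrp_ext
  intro x
  rw [lorAct_mul, unip_act hn hu' hw, unip_act hn hu' hw', unip_act hn hu' (by
    rw [lorB_add_left, hw, hw', add_zero])]
  simp only [lorB_add_left, lorB_add_right, lorB_sub_left, lorB_smul_left, hu', hw, hw', hw2, hw3,
    lorB_comm w' w]
  module

lemma boost_conj_unip (hn : 2 ≤ n) {u u' w : Fin (n+1) → ℝ} (hu : lorB n u u = 0)
    (hu' : lorB n u' u' = 0) (huu : lorB n u u' = 1) (hw : lorB n w u = 0)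
    (hw' : lorB n w u' = 0) {c : ℝ} (hc : c ≠ 0) :
    boost u u' c * unip u' w * boost u u' c⁻¹ = unip u' (c⁻¹ • w) := by
  have huu2 : lorB n u' u = 1 := by rw [lorB_comm, huu]
  have hw2 : lorB n u' w = 0 := by rw [lorB_comm, hw']
  have hw3 : lorB n u w = 0 := by rw [lorB_comm, hw]
  apply lorGrp_ext
  intro x
  rw [lorAct_mul, lorAct_mul, boost_act hn hu hu' huu hc, boost_act hn hu hu' huu (inv_ne_zero hc),
    unip_act hn hu' hw', unip_act hn hu' (by rw [lorB_smul_left, hw', mul_zero])]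
  simp only [lorB_add_left, lorB_sub_left, lorB_smul_left, lorB_smul_right, hu', hu, huu, huu2,
    hw, hw', hw2, hw3]
  match_scalars <;> field_simp <;> ring

/-- Weyl elements -/
def weyl (u u' w : Fin (n+1) → ℝ) (r : ℝ) : LorentzGrp n :=
  unip u' (r • w) * unip u ((2 / r) • w) * unip u' (r • w)

lemma weyl_act (hn : 2 ≤ n) {u u' w : Fin (n+1) → ℝ} (hu : lorB n u u = 0)
    (hu' : lorB n u' u' = 0) (huu : lorB n u u' = 1) (hw : lorB n w u = 0)
    (hw' : lorB n w u' = 0) (hww : lorB n w w = 1) {r : ℝ} (hr : r ≠ 0) (x : Fin (n+1) → ℝ) :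
    lorAct (weyl u u' w r) x = x - lorB n x u' • (u + (r^2/2) • u') -
      lorB n x u • (u' + (2/r^2) • u) - (2 * lorB n x w) • w := by
  have huu2 : lorB n u' u = 1 := by rw [lorB_comm, huu]
  have hw2 : lorB n u' w = 0 := by rw [lorB_comm, hw']
  have hw3 : lorB n u w = 0 := by rw [lorB_comm, hw]
  unfold weyl
  rw [lorAct_mul, lorAct_mul, unip_act hn hu' (by rw [lorB_smul_left, hw', mul_zero]),
    unip_act hn hu (by rw [lorB_smul_left, hw, mul_zero]),
    unip_act hn hu' (by rw [lorB_smul_left, hw', mul_zero])]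
  simp only [lorB_add_left, lorB_sub_left, lorB_smul_left, lorB_smul_right, hu', hu, huu, huu2,
    hw, hw', hw2, hw3, hww]
  match_scalars <;> field_simp <;> ring

lemma boost_eq_weyl (hn : 2 ≤ n) {u u' w : Fin (n+1) → ℝ} (hu : lorB n u u = 0)
    (hu' : lorB n u' u' = 0) (huu : lorB n u u' = 1) (hw : lorB n w u = 0)
    (hw' : lorB n w u' = 0) (hww : lorB n w w = 1) {r : ℝ} (hr : r ≠ 0) :
    boost u u' (r^2) = weyl u u' w 1 * weyl u u' w r := by
  have huu2 : lorB n u' u = 1 := by rw [lorB_comm, huu]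
  have hw2 : lorB n u' w = 0 := by rw [lorB_comm, hw']
  have hw3 : lorB n u w = 0 := by rw [lorB_comm, hw]
  apply lorGrp_ext
  intro x
  rw [lorAct_mul, weyl_act hn hu hu' huu hw hw' hww hr,
    weyl_act hn hu hu' huu hw hw' hww one_ne_zero, boost_act hn hu hu' huu (pow_ne_zero 2 hr)]
  simp only [lorB_add_left, lorB_sub_left, lorB_smul_left, lorB_smul_right, hu', hu, huu, huu2,
    hw, hw', hw2, hw3, hww]
  match_scalars <;> field_simp <;> ring

lemma unip_tendsto (hn : 2 ≤ n) {u' : Fin (n+1) → ℝ} (hu' : lorB n u' u' = 0) {α : Type*}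
    {l : Filter α} {f : α → Fin (n+1) → ℝ} (hf : ∀ a, lorB n (f a) u' = 0)
    {w : Fin (n+1) → ℝ} (hw : lorB n w u' = 0) (hfw : Tendsto f l (𝓝 w)) :
    Tendsto (fun a => unip u' (f a)) l (𝓝 (unip u' w)) := by
  apply lor_tendsto hn
  intro x
  simp only [unip_act hn hu' hw, unip_act hn hu' (hf _)]
  have : Continuous fun w => x + lorB n x u' • w - lorB n x w • u' -
      (lorB n w w / 2 * lorB n x u') • u' := by
    have h1 : Continuous fun w => lorB n x w :=
      lorB_continuous.comp (continuous_const.prodMk continuous_id)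
    have h2 : Continuous fun w => lorB n w w :=
      lorB_continuous.comp (continuous_id.prodMk continuous_id)
    fun_prop
  exact (this.tendsto w).comp hfw

end elements

section laurent
variable {V : Type*} [NormedAddCommGroup V] [NormedSpace ℝ V]

/-- Laurent polynomial functions on the positive reals. -/
def IsLaurent (F : ℝ → (V →L[ℝ] V)) : Prop :=
  ∃ c : ℤ →₀ (V →L[ℝ] V), ∀ r : ℝ, 0 < r → F r = c.sum fun k C => r ^ k • C

lemma IsLaurent.monomial (k : ℤ) (C : V →L[ℝ] V) : IsLaurent fun r => r ^ k • C :=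
  ⟨Finsupp.single k C, fun r _ => by simp⟩

lemma IsLaurent.congr {F G : ℝ → (V →L[ℝ] V)} (hF : IsLaurent F) (h : ∀ r, 0 < r → G r = F r) :
    IsLaurent G := by
  obtain ⟨c, hc⟩ := hF
  exact ⟨c, fun r hr => by rw [h r hr, hc r hr]⟩

lemma IsLaurent.add {F G : ℝ → (V →L[ℝ] V)} (hF : IsLaurent F) (hG : IsLaurent G) :
    IsLaurent fun r => F r + G r := by
  obtain ⟨c, hc⟩ := hF
  obtain ⟨d, hd⟩ := hG
  refine ⟨c + d, fun r hr => ?_⟩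
  change F r + G r = _
  rw [hc r hr, hd r hr, Finsupp.sum_add_index'] <;> simp

lemma IsLaurent.sum {ι : Type*} (s : Finset ι) {F : ι → ℝ → (V →L[ℝ] V)}
    (hF : ∀ i ∈ s, IsLaurent (F i)) : IsLaurent fun r => ∑ i ∈ s, F i r := by
  classical
  induction s using Finset.induction_on with
  | empty => exact ⟨0, fun r _ => by simp⟩
  | insert a s ha ih =>
    simp only [Finset.sum_insert ha]
    exact (hF a (by simp)).add (ih fun i hi => hF i (by simp [hi]))

lemma IsLaurent.mul {F G : ℝ → (V →L[ℝ] V)} (hF : IsLaurent F) (hG : IsLaurent G) :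
    IsLaurent fun r => F r * G r := by
  obtain ⟨c, hc⟩ := hF
  obtain ⟨d, hd⟩ := hG
  refine IsLaurent.congr (F := fun r => ∑ k ∈ c.support, ∑ l ∈ d.support,
    r ^ (k + l) • (c k * d l)) ?_ ?_
  · exact IsLaurent.sum _ fun k _ => IsLaurent.sum _ fun l _ => IsLaurent.monomial _ _
  · intro r hr
    rw [hc r hr, hd r hr, Finsupp.sum, Finsupp.sum, Finset.sum_mul_sum]
    refine Finset.sum_congr rfl fun k _ => Finset.sum_congr rfl fun l _ => ?_
    rw [zpow_add₀ hr.ne', smul_mul_smul_comm]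

lemma IsLaurent.poly (p : Polynomial ℝ) (C : V →L[ℝ] V) : IsLaurent fun r => p.eval r • C := by
  refine IsLaurent.congr (F := fun r => ∑ k ∈ p.support, r ^ (k : ℤ) • (p.coeff k • C)) ?_ ?_
  · exact IsLaurent.sum _ fun k _ => IsLaurent.monomial _ _
  · intro r hr
    rw [Polynomial.eval_eq_sum, Polynomial.sum, Finset.sum_smul]
    refine Finset.sum_congr rfl fun k _ => ?_
    rw [smul_smul, zpow_natCast, mul_comm]

lemma IsLaurent.poly_inv (p : Polynomial ℝ) (C : V →L[ℝ] V) :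
    IsLaurent fun r => p.eval (2 / r) • C := by
  refine IsLaurent.congr (F := fun r => ∑ k ∈ p.support, r ^ (-(k : ℤ)) • ((p.coeff k * 2 ^ k) • C))
    ?_ ?_
  · exact IsLaurent.sum _ fun k _ => IsLaurent.monomial _ _
  · intro r hr
    rw [Polynomial.eval_eq_sum, Polynomial.sum, Finset.sum_smul]
    refine Finset.sum_congr rfl fun k _ => ?_
    rw [smul_smul, _root_.zpow_neg, zpow_natCast, div_pow]
    congr 1; field_simp

lemma laurent_unique (c : ℤ →₀ (V →L[ℝ] V)) (h : ∀ r : ℝ, 0 < r → (c.sum fun k C => r ^ k • C) = 0)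
    [FiniteDimensional ℝ V] : c = 0 := by
  let χ : ℤ → ({r : ℝ // 0 < r} →* ℝ) := fun k =>
    { toFun := fun r => r.1 ^ k
      map_one' := by simp
      map_mul' := fun a b => by simp [mul_zpow] }
  have hχ : Function.Injective χ := by
    intro k l hkl
    have := DFunLike.congr_fun hkl ⟨2, by norm_num⟩
    exact zpow_right_injective₀ (by norm_num : (0:ℝ) < 2) (by norm_num) this
  have hli := (linearIndependent_monoidHom {r : ℝ // 0 < r} ℝ).comp χ hχ
  ext1 k
  by_contra hk
  obtain ⟨φ, hφ⟩ : ∃ φ : Module.Dual ℝ (V →L[ℝ] V), φ (c k) ≠ 0 := by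
    by_contra hcon
    push Not at hcon
    exact hk ((Module.forall_dual_apply_eq_zero_iff ℝ (c k)).1 hcon)
  rw [linearIndependent_iff'] at hli
  refine hφ (hli c.support (fun k => φ (c k)) ?_ k (by simpa using hk))
  funext r
  have := congrArg φ (h r.1 r.2)
  rw [Finsupp.sum, map_sum, map_zero] at this
  simp only [map_smul, smul_eq_mul] at this
  rw [Finset.sum_apply, Pi.zero_apply]
  refine Eq.trans ?_ this
  refine Finset.sum_congr rfl fun k _ => ?_
  simp [χ, mul_comm]

/-- A multiplicative Laurent polynomial function is diagonalised. -/
lemma laurent_eigen [FiniteDimensional ℝ V] {F : ℝ → (V →L[ℝ] V)} {c : ℤ →₀ (V →L[ℝ] V)}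
    (hc : ∀ r : ℝ, 0 < r → F r = c.sum fun k C => r ^ k • C)
    (hF : ∀ r s, 0 < r → 0 < s → F r * F s = F (r * s)) (k : ℤ) {s : ℝ} (hs : 0 < s) :
    c k * F s = s ^ k • c k := by
  classical
  let d : ℤ →₀ (V →L[ℝ] V) := Finsupp.onFinset c.support (fun k => c k * F s - s ^ k • c k) (by
    intro k hk
    rw [Finsupp.mem_support_iff]
    rintro h
    apply hk
    simp [h])
  have hd : d = 0 := by
    apply laurent_unique
    intro r hr
    rw [Finsupp.onFinset_sum _ (by simp)]
    simp only [smul_sub, Finset.sum_sub_distrib]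
    have h1 := hF r s hr hs
    rw [hc r hr, hc (r * s) (mul_pos hr hs), Finsupp.sum, Finsupp.sum, Finset.sum_mul] at h1
    rw [sub_eq_zero]
    convert h1 using 1
    · refine Finset.sum_congr rfl fun k _ => ?_
      rw [smul_mul_assoc]
    · refine Finset.sum_congr rfl fun k _ => ?_
      rw [smul_smul, mul_zpow]
  have := DFunLike.congr_fun hd k
  simpa [d, sub_eq_zero] using this

lemma unipotent_of_conj [FiniteDimensional ℝ V] (U D : ℝ → (V →L[ℝ] V)) (hU : Continuous U)
    (hU0 : U 0 = 1) (hD : ∀ c, 0 < c → D c * D c⁻¹ = 1)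
    (hconj : ∀ c s, 0 < c → D c * U s * D c⁻¹ = U (c⁻¹ * s)) (s : ℝ) :
    (U s - 1) ^ (Module.finrank ℝ V) = 0 := by
  have hdet : ∀ x : ℝ, LinearMap.det (algebraMap ℝ (Module.End ℝ V) x - (U s : V →ₗ[ℝ] V)) =
      (x - 1) ^ Module.finrank ℝ V := by
    intro x
    have h1 : ∀ c : ℝ, 0 < c → (x • (1 : V →L[ℝ] V) - U (c⁻¹ * s)).det =
        (x • (1 : V →L[ℝ] V) - U s).det := by
      intro c hc
      have e : x • (1 : V →L[ℝ] V) - U (c⁻¹ * s) = D c * (x • (1 : V →L[ℝ] V) - U s) * D c⁻¹ := by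
        rw [← hconj c s hc, mul_sub, sub_mul, mul_smul_comm, mul_one, smul_mul_assoc, hD c hc]
      have e2 : ∀ A B : V →L[ℝ] V, (A * B).det = A.det * B.det := fun A B =>
        LinearMap.det_comp (A : V →ₗ[ℝ] V) (B : V →ₗ[ℝ] V)
      have e3 : (D c).det * (D c⁻¹).det = 1 := by
        rw [← e2, hD c hc]
        exact LinearMap.det_id
      rw [e, e2, e2]
      linear_combination (x • (1 : V →L[ℝ] V) - U s).det * e3
    have h2 : Tendsto (fun c : ℝ => (x • (1 : V →L[ℝ] V) - U (c⁻¹ * s)).det) atTop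
        (𝓝 (x • (1 : V →L[ℝ] V) - U 0).det) := by
      have h3 : Tendsto (fun c : ℝ => c⁻¹ * s) atTop (𝓝 0) := by
        simpa using tendsto_inv_atTop_zero.mul_const s
      have h4 : Continuous fun t => (x • (1 : V →L[ℝ] V) - U t).det :=
        ContinuousLinearMap.continuous_det.comp (continuous_const.sub hU)
      exact (h4.tendsto 0).comp h3
    have h3 : (x • (1 : V →L[ℝ] V) - U s).det = (x • (1 : V →L[ℝ] V) - U 0).det := by
      refine tendsto_nhds_unique (f := fun _ : ℝ => (x • (1 : V →L[ℝ] V) - U s).det) (l := atTop)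
        tendsto_const_nhds (h2.congr' ?_)
      filter_upwards [eventually_gt_atTop (0:ℝ)] with c hc
      exact h1 c hc
    rw [hU0] at h3
    have h5 : x • (1 : V →L[ℝ] V) - 1 = (x - 1) • 1 := by rw [sub_smul, one_smul]
    rw [h5] at h3
    have h6 : ((x - 1) • (1 : V →L[ℝ] V)).det = (x - 1) ^ Module.finrank ℝ V := by
      have := LinearMap.det_smul (x - 1) (LinearMap.id : V →ₗ[ℝ] V)
      rw [LinearMap.det_id, mul_one] at this
      exact this
    rw [h6] at h3
    exact h3
  have hcp : LinearMap.charpoly (U s : V →ₗ[ℝ] V) =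
      (Polynomial.X - Polynomial.C 1) ^ Module.finrank ℝ V := by
    apply Polynomial.funext
    intro x
    rw [LinearMap.eval_charpoly, hdet]
    simp
  have := LinearMap.aeval_self_charpoly (U s : V →ₗ[ℝ] V)
  rw [hcp] at this
  simp only [map_pow, map_sub, Polynomial.aeval_X, Polynomial.aeval_C, map_one] at this
  ext v
  have h2 := LinearMap.congr_fun this v
  have h3 : ∀ k : ℕ, ∀ v, ((U s - 1) ^ k) v = (((U s : V →ₗ[ℝ] V) - 1) ^ k) v := by
    intro k
    induction k with
    | zero => intro v; simp
    | succ k ih => intro v; rw [pow_succ, pow_succ]; simp [ih]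
  rw [h3]
  exact h2

/-- A continuous unipotent one-parameter group is polynomial on the nonnegative reals. -/
lemma poly_of_unipotent [FiniteDimensional ℝ V] (U : ℝ → (V →L[ℝ] V)) (hU : Continuous U)
    (hU0 : U 0 = 1) (hadd : ∀ s t, U (s + t) = U s * U t) (d : ℕ)
    (hd : ∀ s, (U s - 1) ^ d = 0) (s : ℝ) (hs : 0 ≤ s) :
    U s = ∑ j ∈ Finset.range d, (Polynomial.C ((j.factorial : ℝ)⁻¹) * descPochhammer ℝ j).eval s •
      (U 1 - 1) ^ j := by
  have hpow : ∀ (s : ℝ) (k : ℕ), U (k * s) = U s ^ k := by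
    intro s k
    induction k with
    | zero => simp [hU0]
    | succ k ih => rw [pow_succ, ← ih, ← hadd]; congr 1; push_cast; ring
  have hbin : ∀ (s : ℝ) (k : ℕ), U (k * s) = ∑ j ∈ Finset.range d,
      (Polynomial.C ((j.factorial : ℝ)⁻¹) * descPochhammer ℝ j).eval (k : ℝ) • (U s - 1) ^ j := by
    intro s k
    have hch : ∀ j : ℕ, (Polynomial.C ((j.factorial : ℝ)⁻¹) * descPochhammer ℝ j).eval (k : ℝ) =
        (k.choose j : ℝ) := by
      intro j
      rw [Polynomial.eval_mul, Polynomial.eval_C, descPochhammer_eval_eq_descFactorial,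
        Nat.descFactorial_eq_factorial_mul_choose]
      push_cast
      have : (j.factorial : ℝ) ≠ 0 := by positivity
      field_simp
    simp only [hch]
    rw [hpow]
    have e : U s = (U s - 1) + 1 := by abel
    have h1 : U s ^ k = ∑ j ∈ Finset.range (k + 1), (k.choose j : ℝ) • (U s - 1) ^ j := by
      conv_lhs => rw [e, (Commute.one_right (U s - 1)).add_pow]
      refine Finset.sum_congr rfl fun j _ => ?_
      rw [one_pow, mul_one, ← nsmul_eq_mul', Nat.cast_smul_eq_nsmul]
    rw [h1]
    have h2 : ∀ m, d ≤ m → ∑ j ∈ Finset.range m, (k.choose j : ℝ) • (U s - 1) ^ j =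
        ∑ j ∈ Finset.range d, (k.choose j : ℝ) • (U s - 1) ^ j := by
      intro m hm
      symm
      refine Finset.sum_subset (Finset.range_mono hm) fun j _ hj => ?_
      have : d ≤ j := by simpa using hj
      rw [pow_eq_zero_of_le this (hd s), smul_zero]
    have h3 : ∀ m, k + 1 ≤ m → ∑ j ∈ Finset.range m, (k.choose j : ℝ) • (U s - 1) ^ j =
        ∑ j ∈ Finset.range (k + 1), (k.choose j : ℝ) • (U s - 1) ^ j := by
      intro m hm
      symm
      refine Finset.sum_subset (Finset.range_mono hm) fun j _ hj => ?_
      have : k < j := by simpa using hj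
      rw [Nat.choose_eq_zero_of_lt this]; simp
    rw [← h2 (max d (k+1)) (le_max_left _ _), ← h3 (max d (k+1)) (le_max_right _ _)]
  -- rational points
  have hrat : ∀ k m : ℕ, 0 < m → U ((k : ℝ) / m) = ∑ j ∈ Finset.range d,
      (Polynomial.C ((j.factorial : ℝ)⁻¹) * descPochhammer ℝ j).eval ((k : ℝ) / m) •
        (U 1 - 1) ^ j := by
    intro k m hm
    have hm' : (m : ℝ) ≠ 0 := by positivity
    rw [← sub_eq_zero, ← Module.forall_dual_apply_eq_zero_iff ℝ]
    intro φ
    rw [map_sub, sub_eq_zero]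
    let p : Polynomial ℝ := ∑ j ∈ Finset.range d,
      (Polynomial.C ((j.factorial : ℝ)⁻¹) * descPochhammer ℝ j) * Polynomial.C (φ ((U 1 - 1) ^ j))
    let p' : Polynomial ℝ := ∑ j ∈ Finset.range d,
      ((Polynomial.C ((j.factorial : ℝ)⁻¹) * descPochhammer ℝ j).comp
        (Polynomial.C (m : ℝ) * Polynomial.X)) * Polynomial.C (φ ((U (1 / m) - 1) ^ j))
    have e1 : ∀ x : ℝ, φ (∑ j ∈ Finset.range d,
      (Polynomial.C ((j.factorial : ℝ)⁻¹) * descPochhammer ℝ j).eval x •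
        (U 1 - 1) ^ j) = p.eval x := by
      intro x
      simp only [p, map_sum, map_smul, Polynomial.eval_finsetSum, smul_eq_mul]
      refine Finset.sum_congr rfl fun j _ => ?_
      rw [Polynomial.eval_mul (q := Polynomial.C _), Polynomial.eval_C]
    have e2 : ∀ k : ℕ, φ (U ((k : ℝ) / m)) = p'.eval ((k : ℝ) / m) := by
      intro k
      have := hbin (1 / m) k
      rw [mul_one_div] at this
      rw [this]
      simp only [p', map_sum, map_smul, Polynomial.eval_finsetSum, smul_eq_mul]
      refine Finset.sum_congr rfl fun j _ => ?_
      rw [Polynomial.eval_mul (q := Polynomial.C (φ _)), Polynomial.eval_C, Polynomial.eval_comp,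
        Polynomial.eval_mul (p := Polynomial.C (m : ℝ)), Polynomial.eval_C, Polynomial.eval_X,
        mul_div_cancel₀ _ hm']
    have e3 : p = p' := by
      apply Polynomial.eq_of_infinite_eval_eq
      refine Set.Infinite.mono (s := Set.range fun k : ℕ => (k : ℝ)) ?_
        (Set.infinite_range_of_injective Nat.cast_injective)
      rintro _ ⟨k, rfl⟩
      have h1 := e2 (k * m)
      have h2 : ((k * m : ℕ) : ℝ) / m = k := by push_cast; field_simp
      rw [h2] at h1
      have h3 := hbin 1 k
      rw [mul_one] at h3
      simp only [Set.mem_ofPred_eq]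
      rw [← h1, ← e1, h3]
    rw [e1, e2, e3]
  -- density
  have hclosed : IsClosed {s : ℝ | U s = ∑ j ∈ Finset.range d,
      (Polynomial.C ((j.factorial : ℝ)⁻¹) * descPochhammer ℝ j).eval s • (U 1 - 1) ^ j} := by
    refine isClosed_eq hU ?_
    refine continuous_finsetSum _ fun j _ => ?_
    exact (Polynomial.continuous _).smul continuous_const
  have ht : Tendsto (fun m : ℕ => ((⌊s * m⌋₊ : ℕ) : ℝ) / (m : ℝ)) atTop (𝓝 s) :=
    (tendsto_nat_floor_mul_div_atTop hs).comp tendsto_natCast_atTop_atTop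
  refine hclosed.mem_of_tendsto ht ?_
  filter_upwards [eventually_gt_atTop 0] with m hm
  exact hrat _ _ hm

end laurent

section weights
variable {n : ℕ} {V : Type*} [NormedAddCommGroup V] [NormedSpace ℝ V] [FiniteDimensional ℝ V]

lemma rho_unip_poly (hn : 2 ≤ n) (ρ : LorentzGrp n →* (V →L[ℝ] V)) (hρ : Continuous fun g => ρ g)
    {u u' w : Fin (n+1) → ℝ} (hu : lorB n u u = 0)
    (hu' : lorB n u' u' = 0) (huu : lorB n u u' = 1) (hw : lorB n w u = 0)
    (hw' : lorB n w u' = 0) :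
    ∃ (d : ℕ) (p : ℕ → Polynomial ℝ) (C : ℕ → (V →L[ℝ] V)), ∀ s : ℝ, 0 ≤ s →
      ρ (unip u' (s • w)) = ∑ j ∈ Finset.range d, (p j).eval s • C j := by
  have ho : ∀ s : ℝ, lorB n (s • w) u' = 0 := fun s => by rw [lorB_smul_left, hw', mul_zero]
  have ho' : ∀ s : ℝ, lorB n (s • w) u = 0 := fun s => by rw [lorB_smul_left, hw, mul_zero]
  have hU : Continuous fun s : ℝ => ρ (unip u' (s • w)) := by
    refine hρ.comp (continuous_iff_continuousAt.2 fun s => ?_)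
    exact unip_tendsto hn hu' ho (ho s)
      ((by fun_prop : Continuous fun s : ℝ => s • w).tendsto s)
  have hU0 : ρ (unip u' ((0:ℝ) • w)) = 1 := by rw [zero_smul, unip_zero hn hu', map_one]
  have hadd : ∀ s t : ℝ, ρ (unip u' ((s + t) • w)) = ρ (unip u' (s • w)) * ρ (unip u' (t • w)) := by
    intro s t
    rw [← map_mul, unip_mul hn hu' (ho s) (ho t), add_smul]
  have hnil := unipotent_of_conj (fun s : ℝ => ρ (unip u' (s • w))) (fun c => ρ (boost u u' c))
    hU hU0 (fun c hc => by
      rw [← map_mul, boost_mul hn hu hu' huu hc.ne' (inv_ne_zero hc.ne'), mul_inv_cancel₀ hc.ne',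
        boost_one hn hu hu' huu, map_one])
    (fun c s hc => by
      rw [← map_mul, ← map_mul, boost_conj_unip hn hu hu' huu (ho' s) (ho s) hc.ne', smul_smul])
  exact ⟨_, _, _, fun s hs => poly_of_unipotent (fun s : ℝ => ρ (unip u' (s • w))) hU hU0 hadd _
    hnil s hs⟩

lemma rho_boost_laurent (hn : 2 ≤ n) (ρ : LorentzGrp n →* (V →L[ℝ] V))
    (hρ : Continuous fun g => ρ g)
    {u u' : Fin (n+1) → ℝ} (hu : lorB n u u = 0)
    (hu' : lorB n u' u' = 0) (huu : lorB n u u' = 1) :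
    IsLaurent fun r => ρ (boost u u' (r ^ 2)) := by
  obtain ⟨w, hw, hw', hww⟩ := exists_unit_orth hn u u' (by rw [← lorB_self, hu])
    (by rw [← lorB_self, hu']) huu
  rw [← lorB_self] at hww
  have h1 : IsLaurent fun r : ℝ => ρ (unip u' (r • w)) := by
    obtain ⟨d, p, C, h⟩ := rho_unip_poly hn ρ hρ hu hu' huu hw hw'
    exact IsLaurent.congr (IsLaurent.sum (Finset.range d) fun j _ => IsLaurent.poly (p j) (C j))
      fun r hr => h r hr.le
  have h2 : IsLaurent fun r : ℝ => ρ (unip u ((2 / r) • w)) := by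
    obtain ⟨d, p, C, h⟩ := rho_unip_poly hn ρ hρ hu' hu (by rw [lorB_comm, huu]) hw' hw
    exact IsLaurent.congr (IsLaurent.sum (Finset.range d) fun j _ => IsLaurent.poly_inv (p j) (C j))
      fun r hr => h (2 / r) (by positivity)
  have h3 : IsLaurent fun _ : ℝ => ρ (weyl u u' w 1) := by
    simpa using IsLaurent.monomial 0 (ρ (weyl u u' w 1))
  refine IsLaurent.congr (h3.mul ((h1.mul h2).mul h1)) fun r hr => ?_
  rw [boost_eq_weyl hn hu hu' huu hw hw' hww hr.ne']
  simp only [weyl, map_mul]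

lemma limit_growth (hn : 2 ≤ n) (ρ : LorentzGrp n →* (V →L[ℝ] V))
    (hρ : Continuous fun g => ρ g) {G : Set (LorentzGrp n)} {v : V} (hv : IsStableVec ρ G v)
    {u u' : Fin (n+1) → ℝ} (hlim : IsLimitDirection n G u)
    (hu' : lorB n u' u' = 0) (huu : lorB n u u' = 1) :
    ∃ (r : ℕ → ℝ) (vs : ℕ → V) (C : ℝ), Tendsto r atTop (𝓝 0) ∧ Tendsto vs atTop (𝓝 v) ∧
      ∀ᶠ k in atTop, 0 < r k ∧ ‖ρ (boost u u' (r k ^ 2)) (vs k)‖ ≤ C := by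
  obtain ⟨hu0, hu, g, lam, hg, hx⟩ := hlim
  rw [← lorB_self] at hu
  have huu2 : lorB n u' u = 1 := by rw [lorB_comm, huu]
  set x : ℕ → (Fin (n+1) → ℝ) := fun k => lam k • lorAct (g k)⁻¹ (basePt n) with hxdef
  have hq : ∀ k, lorB n (x k) (x k) = -2 * (lam k) ^ 2 := by
    intro k
    simp only [hxdef, lorB_smul_left, lorB_smul_right, lorB_act]
    rw [lorB_self, lorQ_basePt hn]
    ring
  have hBx : ∀ y, Tendsto (fun k => lorB n (x k) y) atTop (𝓝 (lorB n u y)) := by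
    intro y
    have : Continuous fun z => lorB n z y :=
      lorB_continuous.comp (continuous_id.prodMk continuous_const)
    exact (this.tendsto u).comp hx
  set α : ℕ → ℝ := fun k => lorB n (x k) u' with hα
  have hα1 : Tendsto α atTop (𝓝 1) := by rw [← huu]; exact hBx u'
  have hlam : Tendsto (fun k => |lam k|) atTop (𝓝 0) := by
    have h1 : Tendsto (fun k => lorB n (x k) (x k)) atTop (𝓝 0) := by
      rw [← hu]
      exact ((lorB_continuous.comp (continuous_id.prodMk continuous_id)).tendsto u).comp hx
    have h2 : Tendsto (fun k => Real.sqrt (lorB n (x k) (x k) / (-2))) atTop (𝓝 0) := by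
      have := (h1.div_const (-2)).sqrt
      simpa using this
    refine h2.congr fun k => ?_
    rw [hq, mul_div_cancel_left₀ _ (by norm_num), Real.sqrt_sq_eq_abs]
  set w : ℕ → (Fin (n+1) → ℝ) := fun k =>
    (α k)⁻¹ • (x k - lorB n (x k) u' • u - lorB n (x k) u • u') with hw
  have hw0 : Tendsto w atTop (𝓝 0) := by
    have h1 : Tendsto w atTop (𝓝 ((1:ℝ)⁻¹ • (u - (lorB n u u') • u - lorB n u u • u'))) := by
      refine Tendsto.smul (hα1.inv₀ one_ne_zero) ?_
      exact (hx.sub ((hBx u').smul_const u)).sub ((hBx u).smul_const u')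
    simpa [huu, hu] using h1
  have hwu' : ∀ k, lorB n (w k) u' = 0 := by
    intro k
    simp only [hw, lorB_smul_left, lorB_sub_left, huu, hu']
    ring
  have hev : ∀ᶠ k in atTop, 0 < α k ∧ lam k ≠ 0 := by
    refine (hα1.eventually (lt_mem_nhds one_pos)).mono fun k hk => ⟨hk, ?_⟩
    intro h
    have : α k = 0 := by simp [hα, hxdef, h, lorB_smul_left]
    linarith
  obtain ⟨C1, hC1⟩ := hv.exists_norm_le
  obtain ⟨C2, hC2⟩ := ((lor_compact hn (u - u')).image (hρ.comp continuous_inv)).isBounded.exists_norm_le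
  refine ⟨fun k => Real.sqrt (|lam k| / α k), fun k => ρ (unip u' (w k))⁻¹ v, C2 * C1, ?_, ?_, ?_⟩
  · have := (hlam.div hα1 one_ne_zero).sqrt
    simpa using this
  · have h0 : lorB n 0 u' = 0 := by rw [← zero_smul ℝ u', lorB_smul_left, zero_mul]
    have h1 := unip_tendsto hn hu' hwu' h0 hw0
    rw [unip_zero hn hu'] at h1
    have h2 : Tendsto (fun k => ρ (unip u' (w k))⁻¹) atTop (𝓝 (ρ (1 : LorentzGrp n)⁻¹)) :=
      ((hρ.comp continuous_inv).tendsto 1).comp h1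
    have h3 := ((ContinuousLinearMap.apply ℝ V v).continuous.tendsto _).comp h2
    simpa [Function.comp_def] using h3
  · filter_upwards [hev] with k hk
    obtain ⟨hαk, hlk⟩ := hk
    have habs : 0 < |lam k| := abs_pos.2 hlk
    refine ⟨Real.sqrt_pos.2 (div_pos habs hαk), ?_⟩
    rw [Real.sq_sqrt (div_pos habs hαk).le]
    set c := α k / |lam k| with hc
    have hc0 : 0 < c := div_pos hαk habs
    have hci : |lam k| / α k = c⁻¹ := by rw [hc, inv_div]
    rw [hci]
    set m := g k * unip u' (w k) * boost u u' c with hm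
    have hbinv : (boost u u' c)⁻¹ = boost u u' c⁻¹ := by
      rw [inv_eq_iff_mul_eq_one, boost_mul hn hu hu' huu hc0.ne' (inv_ne_zero hc0.ne'),
        mul_inv_cancel₀ hc0.ne', boost_one hn hu hu' huu]
    have key : lorAct (unip u' (w k)) (lorAct (boost u u' c) (u - u')) = |lam k|⁻¹ • x k := by
      have hqk := hq k
      have hww : lorB n (w k) (w k) = (α k)⁻¹ ^ 2 * (-2 * lam k ^ 2 - 2 * α k * lorB n (x k) u) := by
        simp only [hw, lorB_smul_left, lorB_smul_right, lorB_sub_left, lorB_sub_right, huu, hu',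
          huu2, hu, hqk, lorB_comm u (x k), lorB_comm u' (x k)]
        simp only [hα]
        ring
      have huw : lorB n u (w k) = 0 := by
        rw [lorB_comm]
        simp only [hw, lorB_smul_left, lorB_sub_left, huu2, hu]
        ring
      have hu'w : lorB n u' (w k) = 0 := by rw [lorB_comm]; exact hwu' k
      rw [boost_act hn hu hu' huu hc0.ne', unip_act hn hu' (hwu' k)]
      simp only [lorB_sub_left, lorB_add_left, lorB_smul_left, hu, hu', huu, huu2, huw, hu'w, hww]
      simp only [hw, hc]
      have hs : lam k ^ 2 = |lam k| ^ 2 := (sq_abs _).symm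
      rw [hs]
      have hα' : lorB n (x k) u' = α k := rfl
      rw [hα']
      generalize |lam k| = L at *
      generalize α k = a at *
      match_scalars <;> field_simp <;> ring
    have hmem : lorAct m (u - u') = basePt n ∨ lorAct m (u - u') = - basePt n := by
      rw [hm, lorAct_mul, lorAct_mul, key, lorAct_smul, hxdef]
      simp only [lorAct_smul, lorAct_act_inv, smul_smul]
      rcases abs_choice (lam k) with h | h
      · left; rw [h, inv_mul_cancel₀ hlk, one_smul]
      · right; rw [h, inv_neg, neg_mul, inv_mul_cancel₀ hlk, neg_smul, one_smul]
    have e1 : boost u u' c⁻¹ * (unip u' (w k))⁻¹ = m⁻¹ * g k := by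
      rw [← hbinv, hm]; group
    have e2 : ρ (boost u u' c⁻¹) (ρ (unip u' (w k))⁻¹ v) = ρ m⁻¹ (ρ (g k) v) := by
      have := congrArg (fun h => ρ h v) e1
      simpa only [map_mul, mul_apply_eq_comp] using this
    rw [e2]
    calc _ ≤ ‖ρ m⁻¹‖ * ‖ρ (g k) v‖ := ContinuousLinearMap.le_opNorm _ _
      _ ≤ C2 * C1 := by
        refine mul_le_mul (hC2 _ ⟨m, hmem, rfl⟩) (hC1 _ ⟨g k, hg k, rfl⟩) (norm_nonneg _) ?_
        exact (norm_nonneg _).trans (hC2 _ ⟨m, hmem, rfl⟩)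

lemma proj_eq_zero {P : V →L[ℝ] V} {v : V} {r : ℕ → ℝ} {vs : ℕ → V} {C : ℝ} {k : ℤ} (hk : k < 0)
    (hr : Tendsto r atTop (𝓝 0)) (hvs : Tendsto vs atTop (𝓝 v))
    (h : ∀ᶠ i in atTop, 0 < r i ∧ ‖(r i) ^ k • P (vs i)‖ ≤ C) : P v = 0 := by
  have h1 : Tendsto (fun i => P (vs i)) atTop (𝓝 (P v)) := (P.continuous.tendsto v).comp hvs
  obtain ⟨m, hm⟩ : ∃ m : ℕ, k = -((m + 1 : ℕ) : ℤ) := ⟨(-k - 1).toNat, by omega⟩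
  have h2 : Tendsto (fun i => r i ^ (m+1) * C) atTop (𝓝 0) := by
    simpa using (hr.pow (m+1)).mul_const C
  refine tendsto_nhds_unique h1 (squeeze_zero_norm' ?_ h2)
  filter_upwards [h] with i hi
  obtain ⟨hi0, hi⟩ := hi
  rw [norm_smul, hm, _root_.zpow_neg, zpow_natCast, norm_inv, norm_pow, Real.norm_of_nonneg hi0.le] at hi
  rwa [inv_mul_le_iff₀ (by positivity)] at hi

lemma boost_fix (hn : 2 ≤ n) (ρ : LorentzGrp n →* (V →L[ℝ] V))
    (hρ : Continuous fun g => ρ g) {G : Set (LorentzGrp n)} {v : V} (hv : IsStableVec ρ G v)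
    {u u' : Fin (n+1) → ℝ} (hlim : IsLimitDirection n G u) (hlim' : IsLimitDirection n G u')
    (huu : lorB n u u' = 1) {t : ℝ} (ht : 0 < t) : ρ (boost u u' t) v = v := by
  have hu : lorB n u u = 0 := by rw [lorB_self]; exact hlim.2.1
  have hu' : lorB n u' u' = 0 := by rw [lorB_self]; exact hlim'.2.1
  have huu2 : lorB n u' u = 1 := by rw [lorB_comm, huu]
  obtain ⟨c, hc⟩ := rho_boost_laurent hn ρ hρ hu hu' huu
  have hmul : ∀ r s : ℝ, 0 < r → 0 < s →
      ρ (boost u u' (r ^ 2)) * ρ (boost u u' (s ^ 2)) = ρ (boost u u' ((r * s) ^ 2)) := by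
    intro r s hr hs
    rw [← map_mul, boost_mul hn hu hu' huu (by positivity) (by positivity), mul_pow]
  have heig := fun (k : ℤ) (s : ℝ) (hs : 0 < s) =>
    laurent_eigen (F := fun r => ρ (boost u u' (r ^ 2))) hc hmul k hs
  have heig' : ∀ (k : ℤ) (s : ℝ) (y : V), 0 < s →
      s ^ k • c k y = c k (ρ (boost u u' (s ^ 2)) y) := by
    intro k s y hs
    have := congrArg (fun A : V →L[ℝ] V => A y) (heig k s hs)
    simpa using this.symm
  have hneg : ∀ k : ℤ, k < 0 → c k v = 0 := by
    intro k hk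
    obtain ⟨r, vs, C, hr, hvs, h⟩ := limit_growth hn ρ hρ hv hlim hu' huu
    refine proj_eq_zero (C := ‖c k‖ * C) hk hr hvs (h.mono fun i hi => ⟨hi.1, ?_⟩)
    rw [heig' k (r i) _ hi.1]
    exact (ContinuousLinearMap.le_opNorm _ _).trans (by gcongr; exact hi.2)
  have hpos : ∀ k : ℤ, 0 < k → c k v = 0 := by
    intro k hk
    obtain ⟨r, vs, C, hr, hvs, h⟩ := limit_growth hn ρ hρ hv hlim' hu huu2
    refine proj_eq_zero (k := -k) (C := ‖c k‖ * C) (by omega) hr hvs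
      (h.mono fun i hi => ⟨hi.1, ?_⟩)
    have hi2 := hi.2
    rw [boost_swap hn hu hu' huu (pow_ne_zero 2 hi.1.ne'), ← inv_pow] at hi2
    rw [_root_.zpow_neg, ← _root_.inv_zpow, heig' k _ _ (inv_pos.2 hi.1)]
    exact (ContinuousLinearMap.le_opNorm _ _).trans (by gcongr)
  have hval : ∀ r : ℝ, 0 < r → ρ (boost u u' (r ^ 2)) v = c 0 v := by
    intro r hr
    have hcr : ρ (boost u u' (r ^ 2)) = _ := hc r hr
    rw [hcr, Finsupp.sum, ContinuousLinearMap.sum_apply]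
    rw [Finset.sum_eq_single 0]
    · simp
    · intro k _ hk
      rw [ContinuousLinearMap.smul_apply]
      rcases lt_or_gt_of_ne hk with h | h
      · rw [hneg k h, smul_zero]
      · rw [hpos k h, smul_zero]
    · intro h
      simp [Finsupp.notMem_support_iff.1 h]
  have h1 := hval 1 one_pos
  rw [one_pow, boost_one hn hu hu' huu, map_one] at h1
  have h2 := hval (Real.sqrt t) (Real.sqrt_pos.2 ht)
  rw [Real.sq_sqrt ht.le, ← h1] at h2
  exact h2

end weights

section ift
variable {𝔄 : Type*} [NormedRing 𝔄] [NormedAlgebra ℝ 𝔄] [FiniteDimensional ℝ 𝔄]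
  {Γ : Type*} [Group Γ] [TopologicalSpace Γ] [IsTopologicalGroup Γ]

lemma exists_prod_param {P : Type*} [Fintype P] [DecidableEq P] (τ : Γ →* 𝔄) (H : Subgroup Γ)
    (γ : P → ℝ → Γ) (X : P → 𝔄) (h0 : ∀ p, γ p 0 = 1) (hH : ∀ p t, γ p t ∈ H)
    (hd : ∀ p, HasStrictDerivAt (fun t => τ (γ p t)) (X p) 0)
    (hd' : ∀ p, HasStrictDerivAt (fun t => τ (γ p t)⁻¹) (-X p) 0) (s : Finset P) :
    ∃ Φ : (P → ℝ) → Γ, Φ 0 = 1 ∧ (∀ t, Φ t ∈ H) ∧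
      HasStrictFDerivAt (fun t => τ (Φ t))
        (∑ p ∈ s, (ContinuousLinearMap.proj (R := ℝ) (φ := fun _ : P => ℝ) p).smulRight (X p)) 0 ∧
      HasStrictFDerivAt (fun t => τ (Φ t)⁻¹)
        (-∑ p ∈ s, (ContinuousLinearMap.proj (R := ℝ) (φ := fun _ : P => ℝ) p).smulRight (X p))
          0 := by
  induction s using Finset.induction_on with
  | empty =>
    refine ⟨fun _ => 1, rfl, fun _ => H.one_mem, ?_, ?_⟩
    · simpa using hasStrictFDerivAt_const (1 : 𝔄) (0 : P → ℝ)
    · simpa using hasStrictFDerivAt_const (1 : 𝔄) (0 : P → ℝ)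
  | insert p s hp ih =>
    obtain ⟨Φ, hΦ0, hΦH, h1, h2⟩ := ih
    have hpr : HasStrictFDerivAt (fun t : P → ℝ => t p)
        (ContinuousLinearMap.proj (R := ℝ) (φ := fun _ : P => ℝ) p) 0 :=
      (ContinuousLinearMap.proj (R := ℝ) (φ := fun _ : P => ℝ) p).hasStrictFDerivAt
    have e1 : HasStrictFDerivAt (fun t : P → ℝ => τ (γ p (t p))) _ 0 :=
      HasStrictFDerivAt.comp (g := fun t => τ (γ p t)) 0 (hd p).hasStrictFDerivAt hpr
    have e2 : HasStrictFDerivAt (fun t : P → ℝ => τ (γ p (t p))⁻¹) _ 0 :=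
      HasStrictFDerivAt.comp (g := fun t => τ (γ p t)⁻¹) 0 (hd' p).hasStrictFDerivAt hpr
    refine ⟨fun t => γ p (t p) * Φ t, by simp [h0, hΦ0], fun t => H.mul_mem (hH _ _) (hΦH _), ?_, ?_⟩
    · simp only [map_mul]
      refine (e1.mul' h1).congr_fderiv ?_
      rw [Finset.sum_insert hp]
      ext t
      simp [h0, hΦ0, add_comm]
    · simp only [_root_.mul_inv_rev, map_mul]
      refine (h2.mul' e2).congr_fderiv ?_
      rw [Finset.sum_insert hp]
      ext t
      simp [h0, hΦ0, add_comm]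

lemma uniq_near_one : ∀ᶠ q in 𝓝 ((1, 1) : 𝔄 × 𝔄), ∀ D : 𝔄, q.1 * D * q.2 = -D → D = 0 := by
  have hc : Tendsto (fun q : 𝔄 × 𝔄 => ‖q.1 - 1‖ * ‖q.2‖ + ‖q.2 - 1‖) (𝓝 (1,1)) (𝓝 0) := by
    have : Continuous (fun q : 𝔄 × 𝔄 => ‖q.1 - 1‖ * ‖q.2‖ + ‖q.2 - 1‖) := by fun_prop
    simpa using this.tendsto (1, 1)
  filter_upwards [hc.eventually (gt_mem_nhds (one_pos))] with q hq D hD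
  have e : (2:ℝ) • D = -((q.1 - 1) * D * q.2) - D * (q.2 - 1) := by
    have : (2:ℝ) • D = D + D := two_smul _ _
    rw [this, sub_mul, sub_mul, hD]; noncomm_ring
  have h1 : ‖(2:ℝ) • D‖ ≤ (‖q.1 - 1‖ * ‖q.2‖ + ‖q.2 - 1‖) * ‖D‖ := by
    rw [e]
    calc _ ≤ ‖(q.1 - 1) * D * q.2‖ + ‖D * (q.2 - 1)‖ := by
          refine (norm_sub_le _ _).trans ?_
          rw [norm_neg]
      _ ≤ ‖q.1 - 1‖ * ‖D‖ * ‖q.2‖ + ‖D‖ * ‖q.2 - 1‖ := by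
          gcongr
          · refine (norm_mul_le _ _).trans ?_
            gcongr
            exact norm_mul_le _ _
          · exact norm_mul_le _ _
      _ = _ := by ring
  rw [norm_smul, Real.norm_ofNat] at h1
  have : ‖D‖ = 0 := by nlinarith [norm_nonneg D]
  exact norm_eq_zero.1 this

lemma nhds_of_param {P : Type*} [Fintype P] [DecidableEq P] (τ : Γ →* 𝔄)
    (hτ : Continuous fun g => τ g) (hinj : Function.Injective fun g => τ g) (H S : Subgroup Γ)
    (γ : P → ℝ → Γ) (X : P → 𝔄) (h0 : ∀ p, γ p 0 = 1) (hH : ∀ p t, γ p t ∈ H ⊓ S)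
    (hd : ∀ p, HasStrictDerivAt (fun t => τ (γ p t)) (X p) 0)
    (hd' : ∀ p, HasStrictDerivAt (fun t => τ (γ p t)⁻¹) (-X p) 0)
    (hS : ∀ g ∈ S, τ g - τ g⁻¹ ∈ Submodule.span ℝ (Set.range X)) :
    ∀ᶠ g in 𝓝 (1 : Γ), g ∈ S → g ∈ H := by
  have : CompleteSpace 𝔄 := FiniteDimensional.complete ℝ 𝔄
  obtain ⟨Φ, hΦ0, hΦH, h1, h2⟩ := exists_prod_param τ (H ⊓ S) γ X h0 hH hd hd' Finset.univ
  set 𝔰 := Submodule.span ℝ (Set.range X) with h𝔰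
  obtain ⟨L, hL⟩ := LinearMap.exists_leftInverse_of_injective 𝔰.subtype 𝔰.ker_subtype
  have hL' : ∀ x (hx : x ∈ 𝔰), L x = ⟨x, hx⟩ := fun x hx =>
    LinearMap.congr_fun hL ⟨x, hx⟩
  set Lc : 𝔄 →L[ℝ] 𝔰 := LinearMap.toContinuousLinearMap L with hLc
  have hΨ := Lc.hasStrictFDerivAt.comp (0 : P → ℝ) (h1.sub h2)
  have hsurj : (Lc.comp (∑ p, (ContinuousLinearMap.proj (R := ℝ) (φ := fun _ : P => ℝ) p).smulRight
      (X p) - -∑ p, (ContinuousLinearMap.proj (R := ℝ) (φ := fun _ : P => ℝ) p).smulRight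
      (X p))).range = ⊤ := by
    rw [eq_top_iff]
    rintro ⟨y, hy⟩ -
    obtain ⟨c, hc⟩ := (Submodule.mem_span_range_iff_exists_fun ℝ).1 hy
    refine ⟨fun p => c p / 2, ?_⟩
    have : (∑ p, (ContinuousLinearMap.proj (R := ℝ) (φ := fun _ : P => ℝ) p).smulRight
      (X p) - -∑ p, (ContinuousLinearMap.proj (R := ℝ) (φ := fun _ : P => ℝ) p).smulRight
      (X p)) (fun p => c p / 2) = y := by
      rw [← hc]
      simp only [sub_neg_eq_add, _root_.add_apply, _root_.sum_apply,
        ContinuousLinearMap.smulRight_apply, ContinuousLinearMap.proj_apply]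
      rw [← Finset.sum_add_distrib]
      refine Finset.sum_congr rfl fun p _ => ?_
      rw [← add_smul, add_halves]
    show Lc ((∑ p, (ContinuousLinearMap.proj (R := ℝ) (φ := fun _ : P => ℝ) p).smulRight
      (X p) - -∑ p, (ContinuousLinearMap.proj (R := ℝ) (φ := fun _ : P => ℝ) p).smulRight
      (X p)) (fun p => c p / 2)) = _
    rw [this]
    exact hL' y hy
  have hmap := hΨ.map_nhds_eq_of_surj hsurj
  have hcont : Tendsto (fun t => τ (Φ t)) (𝓝 0) (𝓝 1) := by
    have := h1.hasFDerivAt.continuousAt.tendsto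
    simpa [hΦ0] using this
  -- choose a neighbourhood for uniqueness
  have hU := uniq_near_one (𝔄 := 𝔄)
  rw [nhds_prod_eq, Filter.eventually_prod_iff] at hU
  obtain ⟨pa, hpa, pb, hpb, hU⟩ := hU
  have hev : ∀ᶠ t in 𝓝 (0 : P → ℝ), pb (τ (Φ t)) := hcont.eventually hpb
  have himg : (fun t => Lc (τ (Φ t) - τ (Φ t)⁻¹)) '' {t | pb (τ (Φ t))} ∈
      𝓝 (Lc (τ (Φ 0) - τ (Φ 0)⁻¹)) := by
    have := Filter.image_mem_map (m := fun t => Lc (τ (Φ t) - τ (Φ t)⁻¹)) hev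
    rw [show Filter.map (fun t => Lc (τ (Φ t) - τ (Φ t)⁻¹)) (𝓝 0) = _ from hmap] at this
    exact this
  have hg1 : Tendsto (fun g => Lc (τ g - τ g⁻¹)) (𝓝 1) (𝓝 (Lc (τ (Φ 0) - τ (Φ 0)⁻¹))) := by
    rw [hΦ0]
    have : Continuous fun g => Lc (τ g - τ g⁻¹) :=
      Lc.continuous.comp (hτ.sub (hτ.comp continuous_inv))
    exact this.tendsto 1
  have hg2 : ∀ᶠ g in 𝓝 (1 : Γ), pa (τ g) := by
    have := hτ.tendsto 1
    rw [map_one] at this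
    exact this.eventually hpa
  filter_upwards [hg1.eventually himg, hg2] with g hg hga hgS
  obtain ⟨t, ht, hte⟩ := hg
  have hΦS := hS _ (hΦH t).2
  have hgS' := hS g hgS
  have heq : τ (Φ t) - τ (Φ t)⁻¹ = τ g - τ g⁻¹ := by
    have : L (τ (Φ t) - τ (Φ t)⁻¹) = L (τ g - τ g⁻¹) := hte
    rw [hL' _ hΦS, hL' _ hgS'] at this
    exact congrArg Subtype.val this
  have a1 : τ g * τ g⁻¹ = 1 := by rw [← map_mul, mul_inv_cancel, map_one]
  have a2 : τ (Φ t)⁻¹ * τ (Φ t) = 1 := by rw [← map_mul, inv_mul_cancel, map_one]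
  have hD := hU hga ht (τ g - τ (Φ t)) (by
    have e : τ g - τ (Φ t) = τ g⁻¹ - τ (Φ t)⁻¹ := by
      rw [sub_eq_sub_iff_add_eq_add] at heq ⊢
      rw [← heq, add_comm]
    show τ g * (τ g - τ (Φ t)) * τ (Φ t) = _
    conv_lhs => rw [e]
    rw [mul_sub, sub_mul, a1, one_mul, mul_assoc, a2, mul_one, neg_sub])
  have : g = Φ t := hinj (sub_eq_zero.1 hD)
  rw [this]
  exact (hΦH t).1

end ift

section geom
variable {n : ℕ}

/-- The action of `O(1,n)` as a homomorphism to continuous linear endomorphisms. -/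
def lorRep (n : ℕ) : LorentzGrp n →* ((Fin (n+1) → ℝ) →L[ℝ] (Fin (n+1) → ℝ)) where
  toFun g := LinearMap.toContinuousLinearMap
    { toFun := fun x => lorAct g x
      map_add' := lorAct_add g
      map_smul' := lorAct_smul g }
  map_one' := by
    ext1 x; exact lorAct_one x
  map_mul' g h := by
    ext1 x; exact lorAct_mul g h x

lemma lorRep_apply (g : LorentzGrp n) (x : Fin (n+1) → ℝ) : lorRep n g x = lorAct g x := rfl

lemma lorRep_injective : Function.Injective fun g => lorRep n g := fun g h e =>
  lorGrp_ext fun x => congrArg (fun A : (Fin (n+1) → ℝ) →L[ℝ] (Fin (n+1) → ℝ) => A x) e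

lemma lorRep_continuous : Continuous fun g => lorRep n g := by
  refine continuous_clm_apply.2 fun x => ?_
  exact lorAct_continuous x

/-- The rank one operator `x ↦ B(x,b) a`. -/
def rkOne (a b : Fin (n+1) → ℝ) : (Fin (n+1) → ℝ) →L[ℝ] (Fin (n+1) → ℝ) :=
  LinearMap.toContinuousLinearMap
    { toFun := fun x => lorB n x b • a
      map_add' := fun x y => by rw [lorB_add_left, add_smul]
      map_smul' := fun c x => by rw [lorB_smul_left, mul_smul]; rfl }

lemma rkOne_apply (a b x : Fin (n+1) → ℝ) : rkOne a b x = lorB n x b • a := rfl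

lemma lorRep_boost (hn : 2 ≤ n) {u u' : Fin (n+1) → ℝ} (hu : lorB n u u = 0)
    (hu' : lorB n u' u' = 0) (huu : lorB n u u' = 1) {c : ℝ} (hc : c ≠ 0) :
    lorRep n (boost u u' c) = 1 + (c - 1) • rkOne u u' + (c⁻¹ - 1) • rkOne u' u := by
  ext1 x
  rw [lorRep_apply, boost_act hn hu hu' huu hc]
  simp [rkOne_apply, smul_smul]

lemma boost_inv (hn : 2 ≤ n) {u u' : Fin (n+1) → ℝ} (hu : lorB n u u = 0)
    (hu' : lorB n u' u' = 0) (huu : lorB n u u' = 1) {c : ℝ} (hc : c ≠ 0) :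
    (boost u u' c)⁻¹ = boost u u' c⁻¹ := by
  rw [inv_eq_iff_mul_eq_one, boost_mul hn hu hu' huu hc (inv_ne_zero hc),
        mul_inv_cancel₀ hc, boost_one hn hu hu' huu]

lemma lorRep_boost_deriv (hn : 2 ≤ n) {u u' : Fin (n+1) → ℝ} (hu : lorB n u u = 0)
    (hu' : lorB n u' u' = 0) (huu : lorB n u u' = 1) :
    HasStrictDerivAt (fun t : ℝ => lorRep n (boost u u' (Real.exp t)))
      (rkOne u u' - rkOne u' u) 0 := by
  have h1 : HasStrictDerivAt (fun t : ℝ => Real.exp t - 1) 1 0 := by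
    have h0 : HasStrictDerivAt (fun t : ℝ => Real.exp t - 1) (Real.exp 0) 0 :=
      (Real.hasStrictDerivAt_exp 0).sub_const 1
    exact h0.congr_deriv Real.exp_zero
  have h2 : HasStrictDerivAt (fun t : ℝ => Real.exp (-t) - 1) (-1) 0 := by
    have hn0 : HasStrictDerivAt (fun t : ℝ => -t) (-1) 0 := (hasStrictDerivAt_id (0:ℝ)).neg
    have h0 : HasStrictDerivAt (fun t : ℝ => Real.exp (-t) - 1) (Real.exp (-0) * (-1)) 0 :=
      (hn0.exp).sub_const 1
    exact h0.congr_deriv (by simp)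
  have h3 := ((h1.smul_const (rkOne u u')).const_add 1).add (h2.smul_const (rkOne u' u))
  have e : (fun t : ℝ => lorRep n (boost u u' (Real.exp t))) =
     ((fun t : ℝ => 1 + (Real.exp t - 1) • rkOne u u') + fun t : ℝ => (Real.exp (-t) - 1) • rkOne u' u) := by
    funext t
    rw [lorRep_boost hn hu hu' huu (Real.exp_pos t).ne', ← Real.exp_neg]
    rfl
  rw [e]
  refine h3.congr_deriv ?_
  rw [one_smul, neg_one_smul, sub_eq_add_neg]

lemma lorRep_boost_inv_deriv (hn : 2 ≤ n) {u u' : Fin (n+1) → ℝ} (hu : lorB n u u = 0)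
    (hu' : lorB n u' u' = 0) (huu : lorB n u u' = 1) :
    HasStrictDerivAt (fun t : ℝ => lorRep n (boost u u' (Real.exp t))⁻¹)
      (-(rkOne u u' - rkOne u' u)) 0 := by
  have h := lorRep_boost_deriv hn hu hu' huu
  have h' : HasStrictDerivAt (fun t : ℝ => -t) (-1) 0 := (hasStrictDerivAt_id (0:ℝ)).neg
  have h2 := HasStrictDerivAt.scomp (g₁ := fun t : ℝ => lorRep n (boost u u' (Real.exp t)))
    (0:ℝ) (by simpa using h) h'
  have e : (fun t : ℝ => lorRep n (boost u u' (Real.exp t))⁻¹) =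
    ((fun t : ℝ => lorRep n (boost u u' (Real.exp t))) ∘ fun t : ℝ => -t) := by
    funext t
    rw [boost_inv hn hu hu' huu (Real.exp_pos t).ne', ← Real.exp_neg]
    rfl
  rw [e]
  refine h2.congr_deriv ?_
  rw [neg_one_smul]

lemma lorB_sum_left {ι : Type*} (s : Finset ι) (f : ι → (Fin (n+1) → ℝ)) (y : Fin (n+1) → ℝ) :
    lorB n (∑ i ∈ s, f i) y = ∑ i ∈ s, lorB n (f i) y := by
  classical
  induction s using Finset.induction_on with
  | empty => simpa using lorB_smul_left (n := n) 0 0 y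
  | insert i s hi ih => rw [Finset.sum_insert hi, Finset.sum_insert hi, lorB_add_left, ih]

/-- Elements of `O(1,n)` fixing pointwise the orthogonal of `E`. -/
def fixOrth (E : Submodule ℝ (Fin (n+1) → ℝ)) : Subgroup (LorentzGrp n) where
  carrier := {g | ∀ x : Fin (n + 1) → ℝ, (∀ e ∈ E, lorB n x e = 0) → lorAct g x = x}
  one_mem' := fun x _ => lorAct_one x
  mul_mem' := fun {a b} ha hb x hx => by rw [lorAct_mul, hb x hx, ha x hx]
  inv_mem' := fun {a} ha x hx => by
    conv_lhs => rw [← ha x hx]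
    exact lorAct_inv_act a x

lemma span_of_fixOrth (hn : 2 ≤ n) {ι : Type*} [Fintype ι] [DecidableEq ι]
    (u : ι → (Fin (n+1) → ℝ)) (hli : LinearIndependent ℝ u)
    {g : LorentzGrp n} (hg : g ∈ fixOrth (Submodule.span ℝ (Set.range u)))
    {T : Submodule ℝ ((Fin (n+1) → ℝ) →L[ℝ] (Fin (n+1) → ℝ))}
    (hT : ∀ i j, rkOne (u i) (u j) - rkOne (u j) (u i) ∈ T) :
    lorRep n g - lorRep n g⁻¹ ∈ T := by
  obtain ⟨L, hL⟩ := LinearMap.exists_leftInverse_of_injective (Finsupp.linearCombination ℝ u)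
    (LinearMap.ker_eq_bot.2 hli)
  have hz : ∀ i, ∃ z, ∀ x, lorB n x z = L x i := fun i =>
    lorB_riesz hn ((Finsupp.lapply i).comp L)
  choose z hz using hz
  have hzu : ∀ i j, lorB n (z i) (u j) = if i = j then 1 else 0 := by
    intro i j
    rw [lorB_comm, hz]
    have := LinearMap.congr_fun hL (Finsupp.single j 1)
    simp only [LinearMap.comp_apply, Finsupp.linearCombination_single, one_smul,
      LinearMap.id_apply] at this
    rw [this, Finsupp.single_apply]
    simp [eq_comm]
  have hperp : ∀ x e, e ∈ Submodule.span ℝ (Set.range u) →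
      lorB n (x - ∑ j, lorB n x (u j) • z j) e = 0 := by
    intro x e he
    induction he using Submodule.span_induction with
    | mem y hy =>
      obtain ⟨k, rfl⟩ := hy
      rw [lorB_sub_left, lorB_sum_left]
      simp [lorB_smul_left, hzu]
    | zero => rw [lorB_comm]; simpa using lorB_smul_left (n := n) 0 0 (x - ∑ j, lorB n x (u j) • z j)
    | add a b _ _ ha hb => rw [lorB_add_right, ha, hb, add_zero]
    | smul c a _ ha => rw [lorB_smul_right, ha, mul_zero]
  set Y := lorRep n g - lorRep n g⁻¹ with hY
  have hYa : ∀ x, Y x = lorAct g x - lorAct g⁻¹ x := fun x => rfl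
  have hYred : ∀ x, Y x = ∑ j, lorB n x (u j) • Y (z j) := by
    intro x
    have h1 := hg _ (hperp x)
    have h2 := (fixOrth (Submodule.span ℝ (Set.range u))).inv_mem hg _ (hperp x)
    have h3 : Y (x - ∑ j, lorB n x (u j) • z j) = 0 := by rw [hYa, h1, h2, sub_self]
    rw [map_sub, sub_eq_zero] at h3
    rw [h3, map_sum]
    simp only [map_smul]
  have hanti : ∀ x y, lorB n (Y x) y = - lorB n x (Y y) := by
    intro x y
    rw [hYa, hYa, lorB_sub_left, lorB_sub_right, lorB_act_left, lorB_act_left, inv_inv]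
    ring
  set c : ι → ι → ℝ := fun i j => lorB n (Y (z j)) (z i) with hc
  have hcanti : ∀ i j, c i j = - c j i := by
    intro i j
    simp only [hc]
    rw [hanti, lorB_comm]
  have hform : Y = ∑ i, ∑ j, (c i j) • rkOne (u i) (u j) := by
    ext1 x
    rw [← sub_eq_zero]
    refine lorB_nondeg hn _ fun y => ?_
    rw [lorB_sub_left, sub_eq_zero]
    have h1 : lorB n (Y x) y = ∑ j, ∑ i, lorB n x (u j) * (lorB n y (u i) * c i j) := by
      rw [hYred x, lorB_sum_left]
      refine Finset.sum_congr rfl fun j _ => ?_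
      rw [lorB_smul_left, hanti, hYred y, lorB_comm (z j), lorB_sum_left, ← mul_neg_one,
        Finset.sum_mul, Finset.mul_sum]
      refine Finset.sum_congr rfl fun i _ => ?_
      rw [lorB_smul_left, hcanti i j]
      simp only [hc]
      ring
    rw [h1, Finset.sum_comm]
    simp only [_root_.sum_apply, _root_.smul_apply, rkOne_apply, lorB_sum_left, lorB_smul_left]
    refine Finset.sum_congr rfl fun i _ => Finset.sum_congr rfl fun j _ => ?_
    rw [lorB_comm y (u i)]
    ring
  have hform2 : Y = (2⁻¹ : ℝ) • ∑ i, ∑ j, (c i j) • (rkOne (u i) (u j) - rkOne (u j) (u i)) := by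
    have e : ∑ i, ∑ j, (c i j) • rkOne (u j) (u i) = - Y := by
      rw [Finset.sum_comm, hform, ← Finset.sum_neg_distrib]
      refine Finset.sum_congr rfl fun i _ => ?_
      rw [← Finset.sum_neg_distrib]
      refine Finset.sum_congr rfl fun j _ => ?_
      rw [hcanti j i]
      module
    simp only [smul_sub, Finset.sum_sub_distrib]
    rw [e, ← hform]
    module
  rw [hform2]
  exact T.smul_mem _ (T.sum_mem fun i _ => T.sum_mem fun j _ => T.smul_mem _ (hT i j))

lemma limitDir_smul {G : Set (LorentzGrp n)} {u : Fin (n+1) → ℝ} (h : IsLimitDirection n G u)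
    {c : ℝ} (hc : c ≠ 0) : IsLimitDirection n G (c • u) := by
  obtain ⟨h0, hq, g, lam, hg, hl⟩ := h
  refine ⟨smul_ne_zero hc h0, ?_, g, fun k => c * lam k, hg, ?_⟩
  · rw [← lorB_self, lorB_smul_left, lorB_smul_right, lorB_self, hq]; simp
  · simpa only [mul_smul] using hl.const_smul c

end geom

section final
variable {n : ℕ} {V : Type*} [NormedAddCommGroup V] [NormedSpace ℝ V] [FiniteDimensional ℝ V]

/-- Stabilizer of a vector. -/
def vecStab (ρ : LorentzGrp n →* (V →L[ℝ] V)) (v : V) : Subgroup (LorentzGrp n) where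
  carrier := {g | ρ g v = v}
  one_mem' := by simp
  mul_mem' := fun {a b} ha hb => by
    show ρ (a * b) v = v
    have ha : ρ a v = v := ha
    have hb : ρ b v = v := hb
    rw [map_mul, mul_apply_eq_comp, hb, ha]
  inv_mem' := fun {a} ha => by
    show ρ a⁻¹ v = v
    have ha : ρ a v = v := ha
    conv_lhs => rw [← ha]
    rw [← mul_apply_eq_comp, ← map_mul, inv_mul_cancel, map_one]
    rfl

lemma stab_nhds (hn : 2 ≤ n) (ρ : LorentzGrp n →* (V →L[ℝ] V)) (hρ : Continuous fun g => ρ g)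
    {G : Set (LorentzGrp n)} {v : V} (hv : IsStableVec ρ G v) :
    ∀ᶠ g in 𝓝 (1 : LorentzGrp n),
      g ∈ fixOrth (Submodule.span ℝ {u | IsLimitDirection n G u}) → g ∈ vecStab ρ v := by
  classical
  obtain ⟨b, hbs, hspan, hli⟩ := exists_linearIndependent ℝ {u | IsLimitDirection n G u}
  have hfin : b.Finite := hli.setFinite
  have : Fintype b := hfin.fintype
  set u : b → (Fin (n+1) → ℝ) := Subtype.val with hu
  have hspan' : Submodule.span ℝ {u | IsLimitDirection n G u} = Submodule.span ℝ (Set.range u) := by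
    rw [hu, Subtype.range_coe, hspan]
  rw [hspan']
  have hl : ∀ i, IsLimitDirection n G (u i) := fun i => hbs i.2
  have hnull : ∀ i, lorB n (u i) (u i) = 0 := fun i => by rw [lorB_self]; exact (hl i).2.1
  have hβ : ∀ i j, i ≠ j → lorB n (u i) (u j) ≠ 0 := by
    intro i j hij
    refine lorB_ne_zero_of_null hn _ _ (hl i).2.1 (hl j).2.1 ?_
    have := hli.comp ![i, j] (by
      intro a b hab
      fin_cases a <;> fin_cases b <;> simp_all)
    have e : u ∘ ![i, j] = ![u i, u j] := by
      funext a
      fin_cases a <;> rfl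
    rw [e] at this
    exact this
  set u' : b × b → (Fin (n+1) → ℝ) := fun p => (lorB n (u p.1) (u p.2))⁻¹ • u p.2 with hu'
  have hnull' : ∀ p, lorB n (u' p) (u' p) = 0 := fun p => by
    simp only [hu', lorB_smul_left, lorB_smul_right, hnull, mul_zero]
  have huu : ∀ p : b × b, p.1 ≠ p.2 → lorB n (u p.1) (u' p) = 1 := fun p hp => by
    simp only [hu', lorB_smul_right]
    exact inv_mul_cancel₀ (hβ _ _ hp)
  set γ : b × b → ℝ → LorentzGrp n := fun p t =>
    if p.1 = p.2 then 1 else boost (u p.1) (u' p) (Real.exp t) with hγ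
  set X : b × b → ((Fin (n+1) → ℝ) →L[ℝ] (Fin (n+1) → ℝ)) := fun p =>
    rkOne (u p.1) (u' p) - rkOne (u' p) (u p.1) with hX
  have hX' : ∀ p, X p = (lorB n (u p.1) (u p.2))⁻¹ •
      (rkOne (u p.1) (u p.2) - rkOne (u p.2) (u p.1)) := by
    intro p
    ext1 x
    simp only [hX, hu', _root_.sub_apply, _root_.smul_apply, rkOne_apply, lorB_smul_right]
    module
  have hX0 : ∀ p : b × b, p.1 = p.2 → X p = 0 := fun p hp => by
    rw [hX', hp, sub_self, smul_zero]
  refine nhds_of_param (lorRep n) lorRep_continuous lorRep_injective (vecStab ρ v) _ γ X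
    ?_ ?_ ?_ ?_ ?_
  · intro p
    by_cases hp : p.1 = p.2
    · simp [hγ, hp]
    · simp only [hγ, if_neg hp, Real.exp_zero]
      exact boost_one hn (hnull _) (hnull' p) (huu p hp)
  · intro p t
    by_cases hp : p.1 = p.2
    · simp only [hγ, if_pos hp]; exact Subgroup.one_mem _
    · simp only [hγ, if_neg hp]
      refine ⟨?_, ?_⟩
      · exact boost_fix hn ρ hρ hv (hl _) (limitDir_smul (hl p.2) (inv_ne_zero (hβ _ _ hp)))
          (huu p hp) (Real.exp_pos t)
      · intro x hx
        have h1 : ∀ i, lorB n x (u i) = 0 := fun i => hx _ (Submodule.subset_span ⟨i, rfl⟩)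
        have h2 : lorB n x (u' p) = 0 := by simp only [hu', lorB_smul_right, h1, mul_zero]
        rw [boost_act hn (hnull _) (hnull' p) (huu p hp) (Real.exp_pos t).ne', h1, h2]
        simp
  · intro p
    by_cases hp : p.1 = p.2
    · simp only [hγ, if_pos hp, hX0 p hp]; exact hasStrictDerivAt_const _ _
    · simp only [hγ, if_neg hp]
      exact lorRep_boost_deriv hn (hnull _) (hnull' p) (huu p hp)
  · intro p
    by_cases hp : p.1 = p.2
    · simp only [hγ, if_pos hp, hX0 p hp, neg_zero]; exact hasStrictDerivAt_const _ _
    · simp only [hγ, if_neg hp]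
      exact lorRep_boost_inv_deriv hn (hnull _) (hnull' p) (huu p hp)
  · intro g hg
    refine span_of_fixOrth hn u hli hg fun i j => ?_
    by_cases hp : i = j
    · rw [hp, sub_self]; exact Submodule.zero_mem _
    · have : rkOne (u i) (u j) - rkOne (u j) (u i) = lorB n (u i) (u j) • X (i, j) := by
        rw [hX', smul_smul, mul_inv_cancel₀ (hβ i j hp), one_smul]
      rw [this]
      exact Submodule.smul_mem _ _ (Submodule.subset_span ⟨(i, j), rfl⟩)

end final

theorem final_aux
    (n : ℕ) (hn : 2 ≤ n)
    (V : Type*) [NormedAddCommGroup V] [NormedSpace ℝ V] [FiniteDimensional ℝ V]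
    (ρ : LorentzGrp n →* (V →L[ℝ] V)) (hρ : Continuous fun g => ρ g)
    (G : Set (LorentzGrp n))
    (E : Submodule ℝ (Fin (n + 1) → ℝ))
    (hE : E = Submodule.span ℝ {u | IsLimitDirection n G u})
    (v₀ : V) (hv₀ : IsStableVec ρ G v₀) :
    ∀ g ∈ SOIdComp n E, ρ g v₀ = v₀ := by
  intro g hg
  have hnh := stab_nhds hn ρ hρ hv₀
  rw [← hE] at hnh
  have hopen : IsOpen (((vecStab ρ v₀).subgroupOf (fixOrth E) : Subgroup (fixOrth E)) :
      Set (fixOrth E)) := by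
    refine Subgroup.isOpen_of_mem_nhds _ (g := 1) ?_
    have := (continuous_subtype_val (p := fun g => g ∈ fixOrth E)).tendsto 1
    filter_upwards [this.eventually hnh] with x hx
    exact hx x.2
  have hclopen : IsClopen (((vecStab ρ v₀).subgroupOf (fixOrth E) : Subgroup (fixOrth E)) :
      Set (fixOrth E)) := ⟨Subgroup.isClosed_of_isOpen _ hopen, hopen⟩
  have hg2 : g ∈ connectedComponentIn (fixOrth E : Set (LorentzGrp n)) 1 :=
    connectedComponentIn_mono 1 (fun x hx => hx.2) hg
  rw [connectedComponentIn_eq_image (fixOrth E).one_mem] at hg2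
  obtain ⟨x, hx, rfl⟩ := hg2
  exact hclopen.connectedComponent_subset (Subgroup.one_mem _) hx

/-- Let `n ≥ 2` and let `ρ` be a continuous representation of `O(1,n)` on a
finite-dimensional real normed vector space `V`. Let `𝒢 ⊆ O(1,n)`, let `E` be the linear span of
the limit directions of `𝒢`, and assume `dim E ≥ 3`. Then every vector `v₀` stable under `𝒢`
is fixed by `SO°(E)`. -/
theorem stable_vector_fixed_by_SO_of_limitSpan
    (n : ℕ) (hn : 2 ≤ n)
    (V : Type*) [NormedAddCommGroup V] [NormedSpace ℝ V] [FiniteDimensional ℝ V]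
    (ρ : LorentzGrp n →* (V →L[ℝ] V)) (hρ : Continuous fun g => ρ g)
    (G : Set (LorentzGrp n))
    (E : Submodule ℝ (Fin (n + 1) → ℝ))
    (hE : E = Submodule.span ℝ {u | IsLimitDirection n G u})
    (hdim : 3 ≤ Module.finrank ℝ E)
    (v₀ : V) (hv₀ : IsStableVec ρ G v₀) :
    ∀ g ∈ SOIdComp n E, ρ g v₀ = v₀ := by
  exact final_aux n hn V ρ hρ G E hE v₀ hv₀
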